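/- (Theorem 26) Let 0 < θ₀ < θ₁ < 1, 0 < θ < 1, 0 < r, r₀, r₁, q₀, q₁ ≤ ∞, a, a₀, a₁, b₀, b₁ ∈ SV, ‖s^{-1/r₀} b₀(s)/a₀(s)‖_{r₀,(1,∞)} < ∞, and ‖s^{-1/r₁} b₁(s)/a₁(s)‖_{r₁,(0,1)} < ∞. Put c₀(t) = a₀(t) ‖s^{-1/r₀} b₀(s)/a₀(s)‖_{r₀,(t,∞)}, c₁(t) = a₁(t) ‖s^{-1/r₁} b₁(s)/a₁(s)‖_{r₁,(0,t)}, and ρ(t) = t^{θ₁-θ₀} c₀(t)/c₁(t). Then (Ā^𝓛_{θ₀,r₀,b₀,q₀,a₀}, Ā^𝓡_{θ₁,r₁,b₁,q₁,a₁})_{θ,r;a} ≅ Ā_{η,r;a^#}, where η = (1-θ)θ₀ + θθ₁ and a^#(t) = c₀(t)^{1-θ} c₁(t)^θ a(ρ(t)). -/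

import Mathlib

open MeasureTheory Set ENNReal Filter

noncomputable section

/-- The `L_q` quasi-norm (with respect to Lebesgue measure) of an `ℝ≥0∞`-valued
function over a set of reals; for `q = ∞` it is the essential supremum. -/
def LqNorm (q : ℝ≥0∞) (s : Set ℝ) (g : ℝ → ℝ≥0∞) : ℝ≥0∞ :=
  if q = ∞ then essSup g (volume.restrict s)
  else (∫⁻ t in s, g t ^ q.toReal) ^ q⁻¹.toReal

/-- The weight `s ↦ s ^ (-1/r) * b s`, as an `ℝ≥0∞`-valued function
(`1/∞ = 0` by convention). -/
def svWgt (r : ℝ≥0∞) (b : ℝ → ℝ) : ℝ → ℝ≥0∞ :=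
  fun s => ENNReal.ofReal (s ^ (-(r⁻¹.toReal)) * b s)

/-- `f` and `g` are equivalent on `s`: each is bounded by a constant multiple
of the other there. -/
def EquivOn (s : Set ℝ) (f g : ℝ → ℝ) : Prop :=
  ∃ C : ℝ, 0 < C ∧ ∀ t ∈ s, C⁻¹ * g t ≤ f t ∧ f t ≤ C * g t

/-- A positive measurable function `b` on `(0,∞)` is slowly varying if for every
`ε > 0`, `t ^ ε * b t` is equivalent to a non-decreasing function and
`t ^ (-ε) * b t` is equivalent to a non-increasing function. -/
def SlowlyVarying (b : ℝ → ℝ) : Prop :=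
  AEMeasurable b (volume.restrict (Ioi 0)) ∧ (∀ t ∈ Ioi (0:ℝ), 0 < b t) ∧
    ∀ ε : ℝ, 0 < ε →
      (∃ g : ℝ → ℝ, MonotoneOn g (Ioi 0) ∧ EquivOn (Ioi 0) (fun t => t ^ ε * b t) g) ∧
      (∃ g : ℝ → ℝ, AntitoneOn g (Ioi 0) ∧ EquivOn (Ioi 0) (fun t => t ^ (-ε) * b t) g)

/-- A quasi-Banach space continuously embedded into the ambient (Hausdorff) space `E`,
recorded via its extended-real-valued quasi-norm; the space itself is the set of
vectors of finite quasi-norm. -/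
structure QuasiBanach (E : Type*) [AddCommGroup E] [Module ℝ E] where
  N : E → ℝ≥0∞
  zero : N 0 = 0
  definite : ∀ x, N x = 0 → x = 0
  smul : ∀ (c : ℝ) (x : E), N (c • x) = ENNReal.ofReal |c| * N x
  quasi : ∃ C : ℝ≥0∞, 1 ≤ C ∧ C ≠ ∞ ∧ ∀ x y, N (x + y) ≤ C * (N x + N y)
  complete : ∀ f : ℕ → E,
    (∀ ε : ℝ≥0∞, 0 < ε → ∃ M : ℕ, ∀ m ≥ M, ∀ n ≥ M, N (f m - f n) < ε) →
    (∀ n, N (f n) ≠ ∞) →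
    ∃ g : E, N g ≠ ∞ ∧ Tendsto (fun n => N (f n - g)) atTop (nhds 0)

variable {E : Type*} [AddCommGroup E] [Module ℝ E]

/-- The Peetre K-functional of the couple whose quasi-norms are `N₀`, `N₁`. -/
def Kf (N₀ N₁ : E → ℝ≥0∞) (t : ℝ) (f : E) : ℝ≥0∞ :=
  ⨅ g : E, N₀ g + ENNReal.ofReal t * N₁ (f - g)

/-- The quasi-norm of the real interpolation space `Ā_{θ,q;b}`. -/
def normK (N₀ N₁ : E → ℝ≥0∞) (θ : ℝ) (q : ℝ≥0∞) (b : ℝ → ℝ) (f : E) : ℝ≥0∞ :=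
  LqNorm q (Ioi 0) fun u =>
    ENNReal.ofReal (u ^ (-θ - q⁻¹.toReal) * b u) * Kf N₀ N₁ u f

/-- The quasi-norm of the limiting interpolation space `Ā^𝓛_{σ,r,b,q,a}`. -/
def normL (N₀ N₁ : E → ℝ≥0∞) (σ : ℝ) (r q : ℝ≥0∞) (b a : ℝ → ℝ) (f : E) : ℝ≥0∞ :=
  LqNorm r (Ioi 0) fun t =>
    ENNReal.ofReal (t ^ (-(r⁻¹.toReal)) * (b t / a t)) *
      LqNorm q (Ioo 0 t) fun u =>
        ENNReal.ofReal (u ^ (-σ - q⁻¹.toReal) * a u) * Kf N₀ N₁ u f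

/-- The quasi-norm of the limiting interpolation space `Ā^𝓡_{σ,r,b,q,a}`. -/
def normR (N₀ N₁ : E → ℝ≥0∞) (σ : ℝ) (r q : ℝ≥0∞) (b a : ℝ → ℝ) (f : E) : ℝ≥0∞ :=
  LqNorm r (Ioi 0) fun t =>
    ENNReal.ofReal (t ^ (-(r⁻¹.toReal)) * (b t / a t)) *
      LqNorm q (Ioi t) fun u =>
        ENNReal.ofReal (u ^ (-σ - q⁻¹.toReal) * a u) * Kf N₀ N₁ u f

/-- Two (extended-real-valued) quasi-norms define the same space with
equivalent quasi-norms. -/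
def EquivNorms (nX nY : E → ℝ≥0∞) : Prop :=
  ∃ C : ℝ≥0∞, 0 < C ∧ C ≠ ∞ ∧ ∀ f : E, C⁻¹ * nY f ≤ nX f ∧ nX f ≤ C * nY f

/-! In the coordinate `x = log t` a weight `t ^ (-σ) * a t` with `a` slowly varying is the
exponential of a function of coarse slope `-σ`: linear up to errors `ε * |x - y|` for every `ε`.
The K-functional changes by bounded factors over unit steps, so all the norms are discrete in
nature, and of the 𝓛- and 𝓡-spaces only the fundamental functions matter. These are the
exponentials of `ν₀ x = -θ₀ * x + log c₀` and `ν₁ x = -θ₁ * x + log c₁`, where the inner exponents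
`q₀`, `q₁` no longer occur. Splitting `f` nearly optimally at the single point `x` gives
`K(exp (ν₀ x - ν₁ x), f; X₀, X₁) ≈ exp (ν₀ x) * K(exp x, f; A₀, A₁)` up to errors in the upper bound
that decay exponentially away from `x`. Since `ν₀ - ν₁ = log ρ` has coarse slope `θ₁ - θ₀ > 0`, it
can be used as a change of variable, which produces the weight `a^#`. -/

/-- The exponential of a real number, as an extended nonnegative real.
Weights on `(0, ∞)` are written `eexp ∘ ω` in the logarithmic coordinate. -/
def eexp (x : ℝ) : ℝ≥0∞ := ENNReal.ofReal (Real.exp x)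

lemma eexp_add (x y : ℝ) : eexp (x + y) = eexp x * eexp y := by
  rw [eexp, Real.exp_add, ENNReal.ofReal_mul (Real.exp_pos x).le, eexp, eexp]

lemma eexp_zero : eexp 0 = 1 := by simp [eexp]

lemma eexp_ne_zero (x : ℝ) : eexp x ≠ 0 := by simp [eexp, Real.exp_pos]

lemma eexp_ne_top (x : ℝ) : eexp x ≠ ∞ := ENNReal.ofReal_ne_top

lemma eexp_le_eexp {x y : ℝ} : eexp x ≤ eexp y ↔ x ≤ y := by
  rw [eexp, eexp, ENNReal.ofReal_le_ofReal_iff (Real.exp_pos y).le, Real.exp_le_exp]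

lemma one_le_eexp {x : ℝ} (hx : 0 ≤ x) : 1 ≤ eexp x :=
  eexp_zero ▸ eexp_le_eexp.2 hx

lemma eexp_neg_mul_eexp (x : ℝ) : eexp (-x) * eexp x = 1 := by
  rw [← eexp_add, neg_add_cancel, eexp_zero]

lemma eexp_log_toReal {x : ℝ≥0∞} (h0 : x ≠ 0) (htop : x ≠ ∞) :
    eexp (Real.log x.toReal) = x := by
  rw [eexp, Real.exp_log (ENNReal.toReal_pos h0 htop), ENNReal.ofReal_toReal htop]

lemma exists_le_eexp {C : ℝ≥0∞} (hC : C ≠ ∞) : ∃ B, 0 ≤ B ∧ C ≤ eexp B := by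
  refine ⟨C.toReal, ENNReal.toReal_nonneg, ?_⟩
  rw [eexp, ← ENNReal.ofReal_toReal hC, ENNReal.toReal_ofReal ENNReal.toReal_nonneg]
  exact ENNReal.ofReal_le_ofReal (by linarith [Real.add_one_le_exp C.toReal])

lemma eexp_rpow (x s : ℝ) : eexp x ^ s = eexp (s * x) := by
  rw [eexp, ENNReal.ofReal_rpow_of_pos (Real.exp_pos x), ← Real.exp_mul, mul_comm, eexp]

/-! ### `L^q` quasi-norms of `ℝ≥0∞`-valued functions -/

section eLpNormLemmas

variable {α : Type*} [MeasurableSpace α] {μ : Measure α}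

lemma eLpNorm_ennreal_eq {q : ℝ≥0∞} (h0 : q ≠ 0) (htop : q ≠ ∞) (g : α → ℝ≥0∞) :
    eLpNorm g q μ = (∫⁻ x, g x ^ q.toReal ∂μ) ^ q.toReal⁻¹ := by
  simp only [eLpNorm_eq_lintegral_rpow_enorm_toReal h0 htop, enorm_eq_self, one_div]

lemma eLpNorm_top_ennreal (g : α → ℝ≥0∞) : eLpNorm g ∞ μ = essSup g μ := by
  simp only [eLpNorm_exponent_top, eLpNormEssSup, enorm_eq_self]

lemma eLpNorm_mono_ennreal {q : ℝ≥0∞} {g h : α → ℝ≥0∞} (hgh : ∀ x, g x ≤ h x) :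
    eLpNorm g q μ ≤ eLpNorm h q μ :=
  eLpNorm_mono_enorm fun x => by simpa only [enorm_eq_self] using hgh x

lemma eLpNorm_restrict_mono_ennreal {q : ℝ≥0∞} {s : Set α} (hs : MeasurableSet s)
    {g h : α → ℝ≥0∞} (hgh : ∀ x ∈ s, g x ≤ h x) :
    eLpNorm g q (μ.restrict s) ≤ eLpNorm h q (μ.restrict s) :=
  eLpNorm_mono_enorm_ae <| (ae_restrict_mem hs).mono fun x hx => by
    simpa only [enorm_eq_self] using hgh x hx

lemma mul_eLpNorm_le (c : ℝ≥0∞) (q : ℝ≥0∞) (g : α → ℝ≥0∞) :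
    c * eLpNorm g q μ ≤ eLpNorm (fun x => c * g x) q μ := by
  rcases eq_or_ne q 0 with rfl | h0
  · simp
  rcases eq_or_ne q ∞ with rfl | htop
  · rw [eLpNorm_top_ennreal, eLpNorm_top_ennreal, ENNReal.essSup_const_mul]
  have hq : 0 < q.toReal := ENNReal.toReal_pos h0 htop
  rw [eLpNorm_ennreal_eq h0 htop, eLpNorm_ennreal_eq h0 htop, ENNReal.le_rpow_inv_iff hq,
    ENNReal.mul_rpow_of_nonneg _ _ hq.le, ENNReal.rpow_inv_rpow hq.ne']
  simp only [ENNReal.mul_rpow_of_nonneg _ _ hq.le]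
  exact lintegral_const_mul_le _ _

lemma eLpNorm_const_mul_ennreal {c : ℝ≥0∞} (hc : c ≠ ∞) (q : ℝ≥0∞) (g : α → ℝ≥0∞) :
    eLpNorm (fun x => c * g x) q μ = c * eLpNorm g q μ := by
  refine le_antisymm ?_ (mul_eLpNorm_le c q g)
  rcases eq_or_ne c 0 with rfl | hc0
  · simp
  calc eLpNorm (fun x => c * g x) q μ
      = c * (c⁻¹ * eLpNorm (fun x => c * g x) q μ) := (ENNReal.mul_inv_cancel_left hc0 hc).symm
    _ ≤ c * eLpNorm (fun x => c⁻¹ * (c * g x)) q μ := by gcongr; exact mul_eLpNorm_le _ _ _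
    _ = c * eLpNorm g q μ := by simp only [ENNReal.inv_mul_cancel_left hc0 hc]

lemma eLpNorm_restrict_union_le (q : ℝ≥0∞) (s t : Set α) (g : α → ℝ≥0∞) :
    eLpNorm g q (μ.restrict (s ∪ t)) ≤
      2 ^ q⁻¹.toReal * (eLpNorm g q (μ.restrict s) + eLpNorm g q (μ.restrict t)) := by
  set X := eLpNorm g q (μ.restrict s) + eLpNorm g q (μ.restrict t) with hX
  rcases eq_or_ne q 0 with rfl | h0
  · simp
  rcases eq_or_ne q ∞ with rfl | htop
  · rw [ENNReal.inv_top, ENNReal.toReal_zero, ENNReal.rpow_zero, one_mul, eLpNorm_top_ennreal]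
    refine essSup_le_of_ae_le _ (ae_restrict_union_iff ..|>.2 ⟨?_, ?_⟩)
    · exact (ENNReal.ae_le_essSup g).mono fun x hx =>
        hx.trans (by rw [hX, eLpNorm_top_ennreal]; exact le_self_add)
    · exact (ENNReal.ae_le_essSup g).mono fun x hx =>
        hx.trans (by rw [hX, eLpNorm_top_ennreal, eLpNorm_top_ennreal]; exact le_add_self)
  have hq : 0 < q.toReal := ENNReal.toReal_pos h0 htop
  rw [eLpNorm_ennreal_eq h0 htop, ENNReal.toReal_inv, ENNReal.rpow_inv_le_iff hq,
    ENNReal.mul_rpow_of_nonneg _ _ hq.le, ENNReal.rpow_inv_rpow hq.ne']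
  have key : ∀ u, eLpNorm g q (μ.restrict u) ≤ X →
      ∫⁻ x in u, g x ^ q.toReal ∂μ ≤ X ^ q.toReal := fun u hu => by
    rwa [eLpNorm_ennreal_eq h0 htop, ENNReal.rpow_inv_le_iff hq] at hu
  calc ∫⁻ x in s ∪ t, g x ^ q.toReal ∂μ
      ≤ ∫⁻ x in s, g x ^ q.toReal ∂μ + ∫⁻ x in t, g x ^ q.toReal ∂μ := lintegral_union_le _ _ _
    _ ≤ X ^ q.toReal + X ^ q.toReal :=
        add_le_add (key s le_self_add) (key t le_add_self)
    _ = 2 * X ^ q.toReal := (two_mul _).symm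

lemma le_eLpNorm_restrict_of_measure_eq_one {q : ℝ≥0∞} (hq : q ≠ 0) {s : Set α}
    (hs : MeasurableSet s) (hμ : μ s = 1) {g : α → ℝ≥0∞} {c : ℝ≥0∞} (hc : ∀ x ∈ s, c ≤ g x) :
    c ≤ eLpNorm g q (μ.restrict s) := by
  have hμ' : μ.restrict s ≠ 0 := by simp [Measure.restrict_eq_zero, hμ]
  calc c = eLpNorm (fun _ => c) q (μ.restrict s) := by
        simp [eLpNorm_const c hq hμ', hμ]
    _ ≤ eLpNorm g q (μ.restrict s) := eLpNorm_restrict_mono_ennreal hs hc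

lemma eLpNorm_iSup_mul_le {ι : Type*} [Countable ι] [MeasurableSpace ι]
    [MeasurableSingletonClass ι] {r : ℝ≥0∞} {w : α → ι → ℝ≥0∞}
    (hw : ∀ k, Measurable fun x => w x k) {C : ℝ≥0∞}
    (hC : ∀ k, eLpNorm (fun x => w x k) r μ ≤ C) (g : ι → ℝ≥0∞) :
    eLpNorm (fun x => ⨆ k, w x k * g k) r μ ≤ C * eLpNorm g r Measure.count := by
  rcases eq_or_ne r 0 with rfl | h0
  · simp
  rcases eq_or_ne r ∞ with rfl | htop
  · simp only [eLpNorm_top_ennreal, essSup_count] at hC ⊢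
    have hle : ∀ᵐ x ∂μ, ∀ k, w x k ≤ C := ae_all_iff.2 fun k =>
      (ENNReal.ae_le_essSup _).mono fun x hx => hx.trans (hC k)
    exact essSup_le_of_ae_le _ <| hle.mono fun x hx =>
      iSup_le fun k => mul_le_mul' (hx k) (le_iSup g k)
  have hr : 0 < r.toReal := ENNReal.toReal_pos h0 htop
  simp only [eLpNorm_ennreal_eq h0 htop, ENNReal.rpow_inv_le_iff hr] at hC ⊢
  rw [ENNReal.mul_rpow_of_nonneg _ _ hr.le, ENNReal.rpow_inv_rpow hr.ne', lintegral_count]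
  calc ∫⁻ x, (⨆ k, w x k * g k) ^ r.toReal ∂μ
      ≤ ∫⁻ x, ∑' k, w x k ^ r.toReal * g k ^ r.toReal ∂μ := by
        refine lintegral_mono fun x => ?_
        rw [← ENNReal.le_rpow_inv_iff hr]
        refine iSup_le fun k => ?_
        rw [ENNReal.le_rpow_inv_iff hr, ENNReal.mul_rpow_of_nonneg _ _ hr.le]
        exact ENNReal.le_tsum k
    _ = ∑' k, (∫⁻ x, w x k ^ r.toReal ∂μ) * g k ^ r.toReal := by
        rw [lintegral_tsum fun k => (((hw k).pow_const _).mul_const _).aemeasurable]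
        exact tsum_congr fun k => lintegral_mul_const _ ((hw k).pow_const _)
    _ ≤ ∑' k, C ^ r.toReal * g k ^ r.toReal :=
        ENNReal.tsum_le_tsum fun k => mul_le_mul_left (hC k) _
    _ = C ^ r.toReal * ∑' k, g k ^ r.toReal := ENNReal.tsum_mul_left

end eLpNormLemmas

/-! ### Functions with a coarse slope -/

/-- `ω` has slope `κ` at large scales. In the logarithmic coordinate this says that
`t ↦ exp (ω (log t))` is regularly varying of index `κ`, both at `0` and at `∞`. -/
def HasCoarseSlope (κ : ℝ) (ω : ℝ → ℝ) : Prop :=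
  ∀ ε > 0, ∃ C, ∀ x y, |ω y - ω x - κ * (y - x)| ≤ ε * |y - x| + C

namespace HasCoarseSlope

variable {κ κ' : ℝ} {ω ω' : ℝ → ℝ}

lemma add (h : HasCoarseSlope κ ω) (h' : HasCoarseSlope κ' ω') :
    HasCoarseSlope (κ + κ') (fun x => ω x + ω' x) := fun ε hε => by
  obtain ⟨C, hC⟩ := h (ε / 2) (half_pos hε)
  obtain ⟨C', hC'⟩ := h' (ε / 2) (half_pos hε)
  refine ⟨C + C', fun x y => ?_⟩
  calc |ω y + ω' y - (ω x + ω' x) - (κ + κ') * (y - x)|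
      = |(ω y - ω x - κ * (y - x)) + (ω' y - ω' x - κ' * (y - x))| := by congr 1; ring
    _ ≤ (ε / 2 * |y - x| + C) + (ε / 2 * |y - x| + C') :=
        (abs_add_le _ _).trans (add_le_add (hC x y) (hC' x y))
    _ = ε * |y - x| + (C + C') := by ring

lemma const_mul (c : ℝ) (h : HasCoarseSlope κ ω) :
    HasCoarseSlope (c * κ) (fun x => c * ω x) := fun ε hε => by
  have hc : 0 < |c| + 1 := by positivity
  obtain ⟨C, hC⟩ := h (ε / (|c| + 1)) (div_pos hε hc)
  refine ⟨(|c| + 1) * C, fun x y => ?_⟩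
  calc |c * ω y - c * ω x - c * κ * (y - x)|
      = |c| * |ω y - ω x - κ * (y - x)| := by rw [← abs_mul]; congr 1; ring
    _ ≤ (|c| + 1) * (ε / (|c| + 1) * |y - x| + C) :=
        mul_le_mul (by linarith) (hC x y) (abs_nonneg _) hc.le
    _ = ε * |y - x| + (|c| + 1) * C := by field_simp

lemma sub (h : HasCoarseSlope κ ω) (h' : HasCoarseSlope κ' ω') :
    HasCoarseSlope (κ - κ') (fun x => ω x - ω' x) := by
  simpa only [neg_one_mul, ← sub_eq_add_neg] using h.add (h'.const_mul (-1))

lemma linear (κ : ℝ) : HasCoarseSlope κ (fun x => κ * x) := fun ε hε =>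
  ⟨0, fun x y => by
    rw [← mul_sub, sub_self, abs_zero, add_zero]
    positivity⟩

lemma comp_neg (h : HasCoarseSlope κ ω) : HasCoarseSlope (-κ) (fun x => ω (-x)) :=
  fun ε hε => (h ε hε).imp fun C hC x y => by
    have hxy := hC (-x) (-y)
    rwa [show -y - -x = -(y - x) by ring, abs_neg, mul_neg, ← neg_mul] at hxy

lemma exists_abs_sub_le (h : HasCoarseSlope κ ω) :
    ∃ L, 0 ≤ L ∧ ∀ x y, |ω x - ω y| ≤ L * (|x - y| + 1) := by
  obtain ⟨C, hC⟩ := h 1 one_pos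
  have hC0 : 0 ≤ C := by simpa using hC 0 0
  refine ⟨|κ| + 1 + C, by positivity, fun x y => ?_⟩
  have hlin : |ω x - ω y| ≤ |ω x - ω y - κ * (x - y)| + |κ * (x - y)| := by
    simpa using abs_add_le (ω x - ω y - κ * (x - y)) (κ * (x - y))
  rw [abs_mul] at hlin
  nlinarith [hC y x, abs_nonneg κ, mul_nonneg hC0 (abs_nonneg (x - y))]

lemma comp (h : HasCoarseSlope κ ω) (h' : HasCoarseSlope κ' ω') :
    HasCoarseSlope (κ * κ') (fun x => ω (ω' x)) := fun ε hε => by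
  obtain ⟨L, hL0, hL⟩ := h'.exists_abs_sub_le
  obtain ⟨C, hC⟩ := h (ε / 2 / (L + 1)) (by positivity)
  obtain ⟨C', hC'⟩ := h'.const_mul κ (ε / 2) (half_pos hε)
  refine ⟨ε / 2 + C + C', fun x y => ?_⟩
  have hinner : |ω (ω' y) - ω (ω' x) - κ * (ω' y - ω' x)| ≤ ε / 2 * (|y - x| + 1) + C :=
    calc |ω (ω' y) - ω (ω' x) - κ * (ω' y - ω' x)|
        ≤ ε / 2 / (L + 1) * |ω' y - ω' x| + C := hC (ω' x) (ω' y)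
      _ ≤ ε / 2 / (L + 1) * ((L + 1) * (|y - x| + 1)) + C := by
          gcongr
          exact (hL y x).trans (by gcongr; linarith)
      _ = ε / 2 * (|y - x| + 1) + C := by field_simp
  calc |ω (ω' y) - ω (ω' x) - κ * κ' * (y - x)|
      = |(ω (ω' y) - ω (ω' x) - κ * (ω' y - ω' x)) +
          (κ * ω' y - κ * ω' x - κ * κ' * (y - x))| := by congr 1; ring
    _ ≤ (ε / 2 * (|y - x| + 1) + C) + (ε / 2 * |y - x| + C') :=
        (abs_add_le _ _).trans (add_le_add hinner (hC' x y))
    _ = ε * |y - x| + (ε / 2 + C + C') := by ring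

lemma exists_le_sub (h : HasCoarseSlope κ ω) (hκ : 0 < κ) :
    ∃ c > 0, ∃ C, ∀ x y, x ≤ y → c * (y - x) - C ≤ ω y - ω x := by
  obtain ⟨C, hC⟩ := h (κ / 2) (half_pos hκ)
  refine ⟨κ / 2, half_pos hκ, C, fun x y hxy => ?_⟩
  have := (abs_le.1 (hC x y)).1
  rw [abs_of_nonneg (sub_nonneg.2 hxy)] at this
  linarith

lemma exists_coarse_rightInverse (h : HasCoarseSlope κ ω) (hκ : 0 < κ) :
    ∃ (ψ : ℝ → ℝ) (B : ℝ), ∀ x, |ω (ψ x) - x| ≤ B := by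
  obtain ⟨c, hc, C, hcC⟩ := h.exists_le_sub hκ
  obtain ⟨L, -, hL⟩ := h.exists_abs_sub_le
  suffices hex : ∀ x, ∃ m : ℤ, ω m ≤ x ∧ x < ω (m + 1) by
    choose m hm hm' using hex
    refine ⟨fun x => m x, 2 * L, fun x => ?_⟩
    have hstep : |ω (m x + 1) - ω (m x)| ≤ 2 * L := by
      simpa [mul_comm, one_add_one_eq_two] using hL (m x + 1) (m x)
    rw [abs_sub_comm, abs_of_nonneg (sub_nonneg.2 (hm x))]
    linarith [hm' x, le_abs_self (ω (m x + 1) - ω (m x))]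
  intro x
  obtain ⟨m, hm, hmax⟩ : ∃ m : ℤ, ω m ≤ x ∧ ∀ k : ℤ, ω k ≤ x → k ≤ m := by
    refine Int.exists_greatest_of_bdd ⟨max 0 ⌈(x + C - ω 0) / c⌉, fun k hk => ?_⟩
      ⟨min 0 ⌊(x - C - ω 0) / c⌋, ?_⟩
    · rcases le_total k 0 with hk0 | hk0
      · exact le_max_of_le_left hk0
      · refine le_max_of_le_right (Int.cast_le (R := ℝ).1 (le_trans ?_ (Int.le_ceil _)))
        rw [le_div_iff₀ hc]
        linarith [hcC 0 k (Int.cast_nonneg hk0)]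
    · set k : ℤ := min 0 ⌊(x - C - ω 0) / c⌋
      have hk0 : (k : ℝ) ≤ 0 := Int.cast_nonpos.2 (min_le_left _ _)
      have hk : (k : ℝ) ≤ (x - C - ω 0) / c :=
        (Int.cast_le.2 (min_le_right _ _)).trans (Int.floor_le _)
      rw [le_div_iff₀ hc] at hk
      linarith [hcC k 0 hk0]
  refine ⟨m, hm, not_le.1 fun hle => ?_⟩
  have := hmax (m + 1) (by exact_mod_cast hle)
  omega

end HasCoarseSlope

lemma hasCoarseSlope_zero_of_eexp_le {τ : ℝ → ℝ}
    (h : ∀ ε > 0, ∃ C ≠ ∞, ∀ x y, eexp (τ x) ≤ C * eexp (ε * |x - y|) * eexp (τ y)) :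
    HasCoarseSlope 0 τ := fun ε hε => by
  obtain ⟨C, hC, hle⟩ := h ε hε
  obtain ⟨B, -, hB⟩ := exists_le_eexp hC
  have hreal : ∀ x y, τ x ≤ B + ε * |x - y| + τ y := fun x y => eexp_le_eexp.1 <| by
    rw [eexp_add, eexp_add]
    exact (hle x y).trans (by gcongr)
  refine ⟨B, fun x y => ?_⟩
  rw [zero_mul, sub_zero, abs_sub_le_iff]
  exact ⟨by linarith [hreal y x], by linarith [abs_sub_comm x y ▸ hreal x y]⟩

/-! ### Coarsely log-Lipschitz functions -/

/-- `log φ` is Lipschitz with constant `A` at scales larger than one. -/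
def CoarselyLogLipschitz (A : ℝ) (φ : ℝ → ℝ≥0∞) : Prop :=
  ∀ x y, φ x ≤ eexp (A * (|x - y| + 1)) * φ y

namespace CoarselyLogLipschitz

variable {A A' : ℝ} {φ φ' : ℝ → ℝ≥0∞}

lemma mono (h : CoarselyLogLipschitz A φ) (hA : A ≤ A') : CoarselyLogLipschitz A' φ := fun x y =>
  (h x y).trans (by gcongr; exact eexp_le_eexp.2 (by gcongr))

lemma mul (h : CoarselyLogLipschitz A φ) (h' : CoarselyLogLipschitz A' φ') :
    CoarselyLogLipschitz (A + A') (fun x => φ x * φ' x) := fun x y => by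
  rw [add_mul, eexp_add, mul_mul_mul_comm]
  exact mul_le_mul' (h x y) (h' x y)

lemma comp_neg (h : CoarselyLogLipschitz A φ) : CoarselyLogLipschitz A (fun x => φ (-x)) :=
  fun x y => by
    have hxy := h (-x) (-y)
    rwa [show -x - -y = -(x - y) by ring, abs_neg] at hxy

lemma le_of_abs_sub_le (h : CoarselyLogLipschitz A φ) (hA : 0 ≤ A) {x y B : ℝ}
    (hxy : |x - y| ≤ B) : φ x ≤ eexp (A * (B + 1)) * φ y :=
  (h x y).trans (by gcongr; exact eexp_le_eexp.2 (by gcongr))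

end CoarselyLogLipschitz

lemma HasCoarseSlope.exists_coarselyLogLipschitz {κ : ℝ} {ω : ℝ → ℝ} (h : HasCoarseSlope κ ω) :
    ∃ A, 0 ≤ A ∧ CoarselyLogLipschitz A (fun x => eexp (ω x)) := by
  obtain ⟨L, hL0, hL⟩ := h.exists_abs_sub_le
  refine ⟨L, hL0, fun x y => ?_⟩
  rw [← eexp_add, eexp_le_eexp]
  linarith [le_abs_self (ω x - ω y), hL x y]

lemma coarselyLogLipschitz_eexp_neg_abs_sub {ε : ℝ} (hε : 0 ≤ ε) (x : ℝ) :
    CoarselyLogLipschitz ε (fun y => eexp (-ε * |y - x|)) := fun y z => by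
  rw [← eexp_add, eexp_le_eexp]
  nlinarith [abs_sub_le z y x, abs_sub_comm y z]

/-- `ψ` increases distances at large scales, up to a constant factor. -/
def CoarselyExpansive (ψ : ℝ → ℝ) : Prop :=
  ∃ c > 0, ∃ C, ∀ x y, c * |x - y| - C ≤ |ψ x - ψ y|

lemma HasCoarseSlope.coarselyExpansive {κ : ℝ} {ω : ℝ → ℝ} (h : HasCoarseSlope κ ω)
    (hκ : 0 < κ) : CoarselyExpansive ω := by
  obtain ⟨c, hc, C, hC⟩ := h.exists_le_sub hκ
  refine ⟨c, hc, C, fun x y => ?_⟩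
  rcases le_total x y with hxy | hxy
  · rw [abs_sub_comm x, abs_of_nonneg (sub_nonneg.2 hxy), abs_sub_comm]
    exact (hC x y hxy).trans (le_abs_self _)
  · rw [abs_of_nonneg (sub_nonneg.2 hxy)]
    exact (hC y x hxy).trans (le_abs_self _)

lemma HasCoarseSlope.coarselyExpansive_rightInverse {κ B : ℝ} {ω ψ : ℝ → ℝ}
    (h : HasCoarseSlope κ ω) (hψ : ∀ x, |ω (ψ x) - x| ≤ B) : CoarselyExpansive ψ := by
  obtain ⟨L, hL0, hL⟩ := h.exists_abs_sub_le
  refine ⟨(L + 1)⁻¹, by positivity, (L + 2 * B) / (L + 1), fun x y => ?_⟩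
  have hxy : |x - y| ≤ |x - ω (ψ x)| + |ω (ψ x) - ω (ψ y)| + |ω (ψ y) - y| :=
    (abs_sub_le _ (ω (ψ y)) _).trans (by gcongr; exact abs_sub_le _ _ _)
  rw [inv_mul_eq_div, ← sub_div, div_le_iff₀ (by positivity)]
  linarith [hψ x, hψ y, hL (ψ x) (ψ y), abs_sub_comm x (ω (ψ x)), abs_nonneg (ψ x - ψ y)]

/-! ### Discretization -/

section Discretization

variable {r : ℝ≥0∞}

lemma eLpNorm_comp_floor (x : ℤ → ℝ≥0∞) :
    eLpNorm (fun t : ℝ => x ⌊t⌋) r volume = eLpNorm x r Measure.count := by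
  have hmap : Measure.map (Int.floor : ℝ → ℤ) volume = Measure.count :=
    Measure.ext_of_singleton fun n => by
      rw [Measure.map_apply Int.measurable_floor (measurableSet_singleton n),
        Int.preimage_floor_singleton, Real.volume_Ico, Measure.count_singleton,
        add_sub_cancel_left, ENNReal.ofReal_one]
  rw [← hmap, eLpNorm_map_measure Measurable.of_discrete.aestronglyMeasurable
    Int.measurable_floor.aemeasurable]
  rfl

lemma abs_sub_floor_le_one (x : ℝ) : |x - ⌊x⌋| ≤ 1 := by
  rw [← Int.fract, Int.abs_fract]
  exact (Int.fract_lt_one x).le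

namespace CoarselyLogLipschitz

variable {A : ℝ} {φ : ℝ → ℝ≥0∞}

lemma eLpNorm_volume_le (h : CoarselyLogLipschitz A φ) (hA : 0 ≤ A) :
    eLpNorm φ r volume ≤ eexp (A * (1 + 1)) * eLpNorm (fun n : ℤ => φ n) r Measure.count := by
  rw [← eLpNorm_comp_floor, ← eLpNorm_const_mul_ennreal (eexp_ne_top _)]
  exact eLpNorm_mono_ennreal fun x => h.le_of_abs_sub_le hA (abs_sub_floor_le_one x)

lemma eLpNorm_count_le (h : CoarselyLogLipschitz A φ) (hA : 0 ≤ A) :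
    eLpNorm (fun n : ℤ => φ n) r Measure.count ≤ eexp (A * (1 + 1)) * eLpNorm φ r volume := by
  rw [← eLpNorm_comp_floor, ← eLpNorm_const_mul_ennreal (eexp_ne_top _)]
  exact eLpNorm_mono_ennreal fun x =>
    h.le_of_abs_sub_le hA (abs_sub_comm _ x ▸ abs_sub_floor_le_one x)

lemma le_eLpNorm_restrict (h : CoarselyLogLipschitz A φ) (hA : 0 ≤ A) {q : ℝ≥0∞} (hq : q ≠ 0)
    {a x : ℝ} (hx : x ∈ Icc a (a + 1)) {s : Set ℝ} (hs : Ioo a (a + 1) ⊆ s) :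
    φ x ≤ eexp (A * (1 + 1)) * eLpNorm φ q (volume.restrict s) := by
  have hnear : ∀ y ∈ Ioo a (a + 1), φ x ≤ eexp (A * (1 + 1)) * φ y := fun y hy =>
    h.le_of_abs_sub_le hA (abs_le.2 ⟨by linarith [hx.1, hy.2], by linarith [hx.2, hy.1]⟩)
  calc φ x ≤ eLpNorm (fun y => eexp (A * (1 + 1)) * φ y) q (volume.restrict (Ioo a (a + 1))) :=
        le_eLpNorm_restrict_of_measure_eq_one hq measurableSet_Ioo (by simp) hnear
    _ ≤ eexp (A * (1 + 1)) * eLpNorm φ q (volume.restrict s) := by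
        rw [eLpNorm_const_mul_ennreal (eexp_ne_top _)]
        gcongr

end CoarselyLogLipschitz

lemma integrable_exp_neg_mul_abs {c : ℝ} (hc : 0 < c) :
    Integrable fun x : ℝ => Real.exp (-c * |x|) := by
  rw [← integrableOn_univ, ← Iic_union_Ioi (a := (0 : ℝ))]
  refine IntegrableOn.union ?_ ?_
  · refine (integrableOn_exp_mul_Iic hc 0).congr_fun (fun x hx => ?_) measurableSet_Iic
    simp only [abs_of_nonpos (mem_Iic.1 hx), neg_mul_neg]
  · refine (integrableOn_exp_mul_Ioi (neg_neg_iff_pos.2 hc) 0).congr_fun (fun x hx => ?_)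
      measurableSet_Ioi
    simp only [abs_of_pos (mem_Ioi.1 hx)]

lemma measurable_eexp_mul_abs (c : ℝ) : Measurable fun y : ℝ => eexp (c * |y|) := by
  unfold eexp
  fun_prop

lemma eLpNorm_eexp_neg_mul_abs_ne_top {ε : ℝ} (hε : 0 < ε) (q : ℝ≥0∞) :
    eLpNorm (fun y : ℝ => eexp (-ε * |y|)) q volume ≠ ∞ := by
  rcases eq_or_ne q 0 with rfl | h0
  · simp
  rcases eq_or_ne q ∞ with rfl | htop
  · rw [eLpNorm_top_ennreal]
    refine ne_top_of_le_ne_top ENNReal.one_ne_top (essSup_le_of_ae_le 1 <| .of_forall fun y => ?_)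
    change eexp (-ε * |y|) ≤ 1
    rw [← eexp_zero, eexp_le_eexp, neg_mul, neg_nonpos]
    positivity
  have hq : 0 < q.toReal := ENNReal.toReal_pos h0 htop
  rw [eLpNorm_ennreal_eq h0 htop]
  refine ENNReal.rpow_ne_top_of_nonneg (inv_nonneg.2 hq.le) ?_
  simp only [eexp_rpow, ← mul_assoc, mul_neg]
  exact (integrable_exp_neg_mul_abs (mul_pos hq hε)).lintegral_lt_top.ne

lemma exists_eLpNorm_eexp_neg_abs_sub_le {ε : ℝ} (hε : 0 < ε) (q : ℝ≥0∞) :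
    ∃ C ≠ ∞, ∀ x : ℝ, eLpNorm (fun y => eexp (-ε * |y - x|)) q volume ≤ C :=
  ⟨_, eLpNorm_eexp_neg_mul_abs_ne_top hε q, fun x =>
    (eLpNorm_comp_measurePreserving (measurable_eexp_mul_abs _).aestronglyMeasurable
      (measurePreserving_sub_right volume x)).le⟩

namespace CoarselyExpansive

lemma exists_eLpNorm_count_eexp_le {ψ : ℝ → ℝ} (hψ : CoarselyExpansive ψ) {δ : ℝ} (hδ : 0 < δ)
    (r : ℝ≥0∞) : ∃ C ≠ ∞, ∀ y : ℝ,
      eLpNorm (fun n : ℤ => eexp (-δ * |y - ψ n|)) r Measure.count ≤ C := by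
  obtain ⟨c, hc, B, hB⟩ := hψ
  have hε : 0 < δ * c / 2 := by positivity
  obtain ⟨C, hC, hle⟩ := exists_eLpNorm_eexp_neg_abs_sub_le hε r
  refine ⟨eexp (δ * (B + 1) / 2) * (eexp (δ * c / 2 * (1 + 1)) * C),
    ENNReal.mul_ne_top (eexp_ne_top _) (ENNReal.mul_ne_top (eexp_ne_top _) hC), fun y => ?_⟩
  obtain ⟨m, hm⟩ : ∃ m : ℤ, ∀ n : ℤ, |y - ψ m| ≤ |y - ψ n| + 1 := by
    have hbdd : BddBelow (range fun n : ℤ => |y - ψ n|) :=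
      ⟨0, forall_mem_range.2 fun n => abs_nonneg _⟩
    obtain ⟨m, hm⟩ := exists_lt_of_ciInf_lt (lt_add_one (⨅ n : ℤ, |y - ψ n|))
    exact ⟨m, fun n => hm.le.trans (by gcongr; exact ciInf_le hbdd n)⟩
  have hexp : ∀ n : ℤ, eexp (-δ * |y - ψ n|) ≤
      eexp (δ * (B + 1) / 2) * eexp (-(δ * c / 2) * |(n : ℝ) - m|) := fun n => by
    rw [← eexp_add, eexp_le_eexp]
    have hdist : c * |(n : ℝ) - m| - B ≤ 2 * |y - ψ n| + 1 := by
      linarith [hB n m, abs_sub_le (ψ n) y (ψ m), abs_sub_comm y (ψ n), hm n]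
    nlinarith
  calc eLpNorm (fun n : ℤ => eexp (-δ * |y - ψ n|)) r Measure.count
      ≤ eexp (δ * (B + 1) / 2) *
          eLpNorm (fun n : ℤ => eexp (-(δ * c / 2) * |(n : ℝ) - m|)) r Measure.count := by
        rw [← eLpNorm_const_mul_ennreal (eexp_ne_top _)]
        exact eLpNorm_mono_ennreal hexp
    _ ≤ _ := by
        gcongr
        exact ((coarselyLogLipschitz_eexp_neg_abs_sub hε.le m).eLpNorm_count_le hε.le).trans
          (by gcongr; exact hle m)

lemma exists_eLpNorm_le_of_le_iSup {ψ : ℝ → ℝ} (hψ : CoarselyExpansive ψ) {δ A : ℝ}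
    (hδ : 0 < δ) (hA : 0 ≤ A) {K : ℝ≥0∞} (hK : K ≠ ∞) (r : ℝ≥0∞) :
    ∃ C ≠ ∞, ∀ F G : ℝ → ℝ≥0∞, CoarselyLogLipschitz A F → CoarselyLogLipschitz A G →
      (∀ x, F x ≤ K * ⨆ y, eexp (-δ * |y - ψ x|) * G y) →
        eLpNorm F r volume ≤ C * eLpNorm G r volume := by
  obtain ⟨C, hC, hle⟩ := hψ.exists_eLpNorm_count_eexp_le hδ r
  set D := eexp (A * (1 + 1))
  set D' := eexp ((δ + A) * (1 + 1))
  have hD : D ≠ ∞ := eexp_ne_top _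
  have hD' : D' ≠ ∞ := eexp_ne_top _
  refine ⟨D * (C * (K * D' * D)), by finiteness, fun F G hF hG hFG => ?_⟩
  have hdisc : ∀ n : ℤ, F n ≤ ⨆ k : ℤ, eexp (-δ * |k - ψ n|) * (K * D' * G k) := fun n => by
    refine (hFG n).trans ?_
    rw [ENNReal.mul_iSup]
    refine iSup_le fun y => le_iSup_of_le ⌊y⌋ ?_
    rw [mul_assoc K, mul_left_comm _ K, mul_left_comm _ D']
    refine mul_le_mul_right ?_ K
    exact ((coarselyLogLipschitz_eexp_neg_abs_sub hδ.le (ψ n)).mul hG).le_of_abs_sub_le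
      (add_nonneg hδ.le hA) (abs_sub_floor_le_one y)
  calc eLpNorm F r volume
      ≤ D * eLpNorm (fun n : ℤ => F n) r Measure.count := hF.eLpNorm_volume_le hA
    _ ≤ D * (C * eLpNorm (fun k : ℤ => K * D' * G k) r Measure.count) := by
        gcongr
        exact (eLpNorm_mono_ennreal hdisc).trans <|
          eLpNorm_iSup_mul_le (w := fun n k : ℤ => eexp (-δ * |k - ψ n|))
            (fun _ => .of_discrete) (fun k => hle k) fun k : ℤ => K * D' * G k
    _ ≤ D * (C * (K * D' * (D * eLpNorm G r volume))) := by
        rw [eLpNorm_const_mul_ennreal (by finiteness)]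
        gcongr
        exact hG.eLpNorm_count_le hA
    _ = D * (C * (K * D' * D)) * eLpNorm G r volume := by ring

end CoarselyExpansive

namespace HasCoarseSlope

variable {κ A : ℝ} {ω : ℝ → ℝ}

lemma exists_eLpNorm_le_of_le_comp (h : HasCoarseSlope κ ω) (hκ : 0 < κ) (hA : 0 ≤ A)
    {K : ℝ≥0∞} (hK : K ≠ ∞) (r : ℝ≥0∞) :
    ∃ C ≠ ∞, ∀ F G : ℝ → ℝ≥0∞, CoarselyLogLipschitz A F → CoarselyLogLipschitz A G →
      (∀ x, F x ≤ K * G (ω x)) → eLpNorm F r volume ≤ C * eLpNorm G r volume := by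
  obtain ⟨C, hC, hle⟩ :=
    (h.coarselyExpansive hκ).exists_eLpNorm_le_of_le_iSup one_pos hA hK r
  refine ⟨C, hC, fun F G hF hG hFG => hle F G hF hG fun x => (hFG x).trans ?_⟩
  gcongr
  exact le_iSup_of_le (ω x) (by simp [eexp_zero])

lemma exists_eLpNorm_le_of_comp_le_iSup (h : HasCoarseSlope κ ω) (hκ : 0 < κ) {δ : ℝ}
    (hδ : 0 < δ) (hA : 0 ≤ A) {K : ℝ≥0∞} (hK : K ≠ ∞) (r : ℝ≥0∞) :
    ∃ C ≠ ∞, ∀ F G : ℝ → ℝ≥0∞, CoarselyLogLipschitz A F → CoarselyLogLipschitz A G →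
      (∀ x, F (ω x) ≤ K * ⨆ y, eexp (-δ * |y - x|) * G y) →
        eLpNorm F r volume ≤ C * eLpNorm G r volume := by
  obtain ⟨ψ, B, hψ⟩ := h.exists_coarse_rightInverse hκ
  obtain ⟨C, hC, hle⟩ := (h.coarselyExpansive_rightInverse hψ).exists_eLpNorm_le_of_le_iSup
    hδ hA (ENNReal.mul_ne_top (eexp_ne_top (A * (B + 1))) hK) r
  refine ⟨C, hC, fun F G hF hG hFG => hle F G hF hG fun x => ?_⟩
  calc F x ≤ eexp (A * (B + 1)) * F (ω (ψ x)) :=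
        hF.le_of_abs_sub_le hA (abs_sub_comm x _ ▸ hψ x)
    _ ≤ _ := by
        rw [mul_assoc]
        gcongr
        exact hFG (ψ x)

end HasCoarseSlope

end Discretization

/-! ### Limiting norms in the logarithmic coordinate -/

/-- The `L^r` norm over `(x, ∞)` of the weight `eexp ∘ β`. -/
def tailNorm (r : ℝ≥0∞) (β : ℝ → ℝ) (x : ℝ) : ℝ≥0∞ :=
  eLpNorm (fun y => eexp (β y)) r (volume.restrict (Ioi x))

/-- The iterated norm behind `normL`, written in the logarithmic coordinate: `β` is the outer
and `ω` the inner weight. Reflecting `x ↦ -x` turns it into the one behind `normR`. -/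
def limNorm (r q : ℝ≥0∞) (β ω : ℝ → ℝ) (φ : ℝ → ℝ≥0∞) : ℝ≥0∞ :=
  eLpNorm (fun x => eexp (β x) *
    eLpNorm (fun y => eexp (ω y) * φ y) q (volume.restrict (Iio x))) r volume

section TailNorm

variable {r : ℝ≥0∞} {β : ℝ → ℝ}

lemma HasCoarseSlope.exists_eexp_le_tailNorm (hβ : HasCoarseSlope 0 β) (hr : r ≠ 0) :
    ∃ C ≠ ∞, ∀ x, eexp (β x) ≤ C * tailNorm r β x := by
  obtain ⟨A, hA, hβA⟩ := hβ.exists_coarselyLogLipschitz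
  exact ⟨_, eexp_ne_top _, fun x =>
    hβA.le_eLpNorm_restrict hA hr (left_mem_Icc.2 (by linarith)) Ioo_subset_Ioi_self⟩

lemma HasCoarseSlope.exists_eLpNorm_mul_eexp_le (hβ : HasCoarseSlope 0 β) {ε : ℝ} (hε : 0 < ε)
    (r : ℝ≥0∞) : ∃ C ≠ ∞, ∀ x,
      eLpNorm (fun z => eexp (β z) * eexp (-ε * |z - x|)) r volume ≤ C * eexp (β x) := by
  obtain ⟨B, hB⟩ := hβ (ε / 2) (half_pos hε)
  obtain ⟨C, hC, hle⟩ := exists_eLpNorm_eexp_neg_abs_sub_le (half_pos hε) r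
  refine ⟨eexp B * C, ENNReal.mul_ne_top (eexp_ne_top _) hC, fun x => ?_⟩
  have hexp : ∀ z, eexp (β z) * eexp (-ε * |z - x|) ≤
      eexp (B + β x) * eexp (-(ε / 2) * |z - x|) := fun z => by
    rw [← eexp_add, ← eexp_add, eexp_le_eexp]
    linarith [(abs_le.1 (hB x z)).2]
  calc eLpNorm (fun z => eexp (β z) * eexp (-ε * |z - x|)) r volume
      ≤ eexp (B + β x) * eLpNorm (fun z => eexp (-(ε / 2) * |z - x|)) r volume := by
        rw [← eLpNorm_const_mul_ennreal (eexp_ne_top _)]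
        exact eLpNorm_mono_ennreal hexp
    _ ≤ eexp (B + β x) * C := by gcongr; exact hle x
    _ = eexp B * C * eexp (β x) := by rw [eexp_add]; ring

lemma HasCoarseSlope.exists_tailNorm_le (hβ : HasCoarseSlope 0 β) (hr : r ≠ 0) {ε : ℝ}
    (hε : 0 < ε) :
    ∃ C ≠ ∞, ∀ x y, tailNorm r β x ≤ C * eexp (ε * |x - y|) * tailNorm r β y := by
  obtain ⟨C, hC, hpt⟩ := hβ.exists_eexp_le_tailNorm hr
  obtain ⟨C', hC', hint⟩ := hβ.exists_eLpNorm_mul_eexp_le hε r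
  refine ⟨2 ^ r⁻¹.toReal * (C' * C + 1), by finiteness, fun x y => ?_⟩
  have hcover : Ioi x ⊆ Ioc x y ∪ Ioi y := fun z hz => (le_or_gt z y).imp (⟨hz, ·⟩) id
  have hmid : eLpNorm (fun z => eexp (β z)) r (volume.restrict (Ioc x y)) ≤
      C' * C * eexp (ε * |x - y|) * tailNorm r β y := by
    have hexp : ∀ z ∈ Ioc x y,
        eexp (β z) ≤ eexp (ε * |x - y|) * (eexp (β z) * eexp (-ε * |z - y|)) := fun z hz => by
      rw [← eexp_add, ← eexp_add, eexp_le_eexp, abs_of_neg (sub_neg.2 (hz.1.trans_le hz.2)),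
        abs_of_nonpos (sub_nonpos.2 hz.2)]
      nlinarith [hz.1]
    calc eLpNorm (fun z => eexp (β z)) r (volume.restrict (Ioc x y))
        ≤ eexp (ε * |x - y|) * eLpNorm (fun z => eexp (β z) * eexp (-ε * |z - y|)) r volume := by
          rw [← eLpNorm_const_mul_ennreal (eexp_ne_top _)]
          exact (eLpNorm_restrict_mono_ennreal measurableSet_Ioc hexp).trans
            (eLpNorm_mono_measure _ Measure.restrict_le_self)
      _ ≤ eexp (ε * |x - y|) * (C' * (C * tailNorm r β y)) := by
          gcongr
          exact (hint y).trans (by gcongr; exact hpt y)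
      _ = C' * C * eexp (ε * |x - y|) * tailNorm r β y := by ring
  calc tailNorm r β x
      ≤ 2 ^ r⁻¹.toReal *
          (eLpNorm (fun z => eexp (β z)) r (volume.restrict (Ioc x y)) + tailNorm r β y) :=
        (eLpNorm_mono_measure _ (Measure.restrict_mono hcover le_rfl)).trans
          (eLpNorm_restrict_union_le ..)
    _ ≤ 2 ^ r⁻¹.toReal * (C' * C * eexp (ε * |x - y|) * tailNorm r β y +
          eexp (ε * |x - y|) * tailNorm r β y) := by
        gcongr
        exact le_mul_of_one_le_left' (one_le_eexp (by positivity))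
    _ = 2 ^ r⁻¹.toReal * (C' * C + 1) * eexp (ε * |x - y|) * tailNorm r β y := by ring

/-- The fundamental function of `limNorm r q β ω`, up to constants: the logarithm of
`eexp (ω x) * tailNorm r β x`. It is meaningful when the tail norms of `β` are finite. -/
def limWeight (r : ℝ≥0∞) (β ω : ℝ → ℝ) (x : ℝ) : ℝ :=
  ω x + Real.log (tailNorm r β x).toReal

lemma HasCoarseSlope.tailNorm_ne_zero (hβ : HasCoarseSlope 0 β) (hr : r ≠ 0) (x : ℝ) :
    tailNorm r β x ≠ 0 := fun h0 => by
  obtain ⟨C, -, hle⟩ := hβ.exists_eexp_le_tailNorm hr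
  exact eexp_ne_zero (β x) (le_zero_iff.1 (by simpa only [h0, mul_zero] using hle x))

lemma HasCoarseSlope.tailNorm_ne_top (hβ : HasCoarseSlope 0 β) (hr : r ≠ 0) {y : ℝ}
    (hy : tailNorm r β y ≠ ∞) (x : ℝ) : tailNorm r β x ≠ ∞ := by
  obtain ⟨C, hC, hle⟩ := hβ.exists_tailNorm_le hr one_pos
  exact ne_top_of_le_ne_top (by finiteness [eexp_ne_top (1 * |x - y|)]) (hle x y)

lemma HasCoarseSlope.hasCoarseSlope_limWeight {σ : ℝ} {ω : ℝ → ℝ} (hβ : HasCoarseSlope 0 β)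
    (hω : HasCoarseSlope σ ω) (hr : r ≠ 0) (htail : ∀ x, tailNorm r β x ≠ ∞) :
    HasCoarseSlope σ (limWeight r β ω) := by
  have htau : HasCoarseSlope 0 (fun x => Real.log (tailNorm r β x).toReal) :=
    hasCoarseSlope_zero_of_eexp_le fun ε hε => by
      simpa only [eexp_log_toReal (hβ.tailNorm_ne_zero hr _) (htail _)] using
        hβ.exists_tailNorm_le hr hε
  exact add_zero σ ▸ hω.add htau

lemma HasCoarseSlope.eexp_limWeight {ω : ℝ → ℝ} (hβ : HasCoarseSlope 0 β) (hr : r ≠ 0) {x : ℝ}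
    (htail : tailNorm r β x ≠ ∞) :
    eexp (limWeight r β ω x) = eexp (ω x) * tailNorm r β x := by
  rw [limWeight, eexp_add, eexp_log_toReal (hβ.tailNorm_ne_zero hr x) htail]

end TailNorm

/-- `Φ` is, up to constants, a lattice functional whose value at functions sharply peaked (relative
to `eexp (σ * x)`) at `x` is `eexp (ν x)` times the height of the peak; this is the analogue for
functionals of the classes `C(σ)` of Lions and Peetre. -/
structure IsOfClass (σ : ℝ) (ν : ℝ → ℝ) (Φ : (ℝ → ℝ≥0∞) → ℝ≥0∞) : Prop where
  exists_eexp_mul_le : ∃ C ≠ ∞, ∀ φ, CoarselyLogLipschitz 1 φ → ∀ x, eexp (ν x) * φ x ≤ C * Φ φ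
  exists_le_mul_eexp : ∀ ε > 0, ∃ C ≠ ∞, ∀ φ x, ∀ M ≠ ∞,
    (∀ y, φ y ≤ M * eexp (σ * (y - x) - ε * |y - x|)) → Φ φ ≤ C * M * eexp (ν x)

lemma IsOfClass.reflect {σ : ℝ} {ν : ℝ → ℝ} {Φ : (ℝ → ℝ≥0∞) → ℝ≥0∞} (h : IsOfClass σ ν Φ) :
    IsOfClass (-σ) (fun x => ν (-x)) (fun φ => Φ fun x => φ (-x)) where
  exists_eexp_mul_le := by
    obtain ⟨C, hC, hle⟩ := h.exists_eexp_mul_le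
    exact ⟨C, hC, fun φ hφ x => by simpa only [neg_neg] using hle _ hφ.comp_neg (-x)⟩
  exists_le_mul_eexp ε hε := by
    obtain ⟨C, hC, hle⟩ := h.exists_le_mul_eexp ε hε
    refine ⟨C, hC, fun φ x M hM hφ => hle _ _ M hM fun y => ?_⟩
    have hrefl := hφ (-y)
    rwa [show -y - x = -(y - -x) by ring, abs_neg, neg_mul_neg] at hrefl

section LimNorm

variable {r q : ℝ≥0∞} {β ω : ℝ → ℝ} {σ : ℝ}

lemma exists_eexp_mul_le_limNorm (hβ : HasCoarseSlope 0 β) (hω : HasCoarseSlope σ ω)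
    (hr : r ≠ 0) (hq : q ≠ 0) (htail : ∀ x, tailNorm r β x ≠ ∞) :
    ∃ C ≠ ∞, ∀ φ, CoarselyLogLipschitz 1 φ → ∀ x,
      eexp (limWeight r β ω x) * φ x ≤ C * limNorm r q β ω φ := by
  obtain ⟨A, hA, hωA⟩ := hω.exists_coarselyLogLipschitz
  refine ⟨eexp ((A + 1) * (1 + 1)), eexp_ne_top _, fun φ hφ x => ?_⟩
  set D := eexp ((A + 1) * (1 + 1))
  let inner : ℝ → ℝ≥0∞ := fun z => eLpNorm (fun y => eexp (ω y) * φ y) q (volume.restrict (Iio z))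
  have hinner : eexp (ω x) * φ x ≤ D * inner x :=
    (hωA.mul hφ).le_eLpNorm_restrict (a := x - 1) (by linarith) hq
      ⟨by linarith, by linarith⟩ fun y hy => by simpa using hy.2
  have hmono : ∀ z ∈ Ioi x, inner x ≤ inner z := fun z hz =>
    eLpNorm_mono_measure _ (Measure.restrict_mono (Iio_subset_Iio (mem_Ioi.1 hz).le) le_rfl)
  calc eexp (limWeight r β ω x) * φ x = tailNorm r β x * (eexp (ω x) * φ x) := by
        rw [hβ.eexp_limWeight hr (htail x)]; ring
    _ ≤ tailNorm r β x * (D * inner x) := by gcongr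
    _ = D * (inner x * tailNorm r β x) := by ring
    _ ≤ D * eLpNorm (fun z => inner x * eexp (β z)) r (volume.restrict (Ioi x)) := by
        gcongr
        exact mul_eLpNorm_le _ _ _
    _ ≤ D * limNorm r q β ω φ := by
        gcongr
        refine (eLpNorm_restrict_mono_ennreal measurableSet_Ioi fun z hz => ?_).trans
          (eLpNorm_mono_measure _ Measure.restrict_le_self)
        rw [mul_comm]
        gcongr
        exact hmono z hz

lemma exists_eexp_mul_le_of_decay (hω : HasCoarseSlope (-σ) ω) {ε : ℝ} (hε : 0 < ε) :
    ∃ C ≠ ∞, ∀ (φ : ℝ → ℝ≥0∞) (x : ℝ) (M : ℝ≥0∞),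
      (∀ y, φ y ≤ M * eexp (σ * (y - x) - ε * |y - x|)) →
        ∀ y, eexp (ω y) * φ y ≤ C * M * eexp (ω x) * eexp (-(ε / 2) * |y - x|) := by
  obtain ⟨B, hB⟩ := hω (ε / 2) (half_pos hε)
  refine ⟨eexp B, eexp_ne_top _, fun φ x M hφ y => ?_⟩
  have hexp : eexp (ω y) * eexp (σ * (y - x) - ε * |y - x|) ≤
      eexp B * eexp (ω x) * eexp (-(ε / 2) * |y - x|) := by
    rw [← eexp_add, ← eexp_add, ← eexp_add, eexp_le_eexp]
    linarith [(abs_le.1 (hB x y)).2]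
  calc eexp (ω y) * φ y
      ≤ M * (eexp (ω y) * eexp (σ * (y - x) - ε * |y - x|)) := by
        rw [mul_left_comm]
        gcongr
        exact hφ y
    _ ≤ M * (eexp B * eexp (ω x) * eexp (-(ε / 2) * |y - x|)) := by gcongr
    _ = eexp B * M * eexp (ω x) * eexp (-(ε / 2) * |y - x|) := by ring

lemma exists_eLpNorm_Iio_le_of_decay {ε : ℝ} (hε : 0 < ε) (q : ℝ≥0∞) :
    ∃ C ≠ ∞, ∀ (g : ℝ → ℝ≥0∞) (x : ℝ), ∀ K ≠ ∞, (∀ y, g y ≤ K * eexp (-ε * |y - x|)) →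
      ∀ z, eLpNorm g q (volume.restrict (Iio z)) ≤ C * K * eexp (-(ε / 2) * max (x - z) 0) := by
  obtain ⟨C, hC, hle⟩ := exists_eLpNorm_eexp_neg_abs_sub_le (half_pos hε) q
  refine ⟨C, hC, fun g x K hK hg z => ?_⟩
  have hdecay : ∀ y ∈ Iio z, g y ≤
      K * eexp (-(ε / 2) * max (x - z) 0) * eexp (-(ε / 2) * |y - x|) := fun y hy => by
    refine (hg y).trans ?_
    rw [mul_assoc, ← eexp_add]
    gcongr
    have hdist : max (x - z) 0 ≤ |y - x| :=
      max_le (by linarith [mem_Iio.1 hy, neg_abs_le (y - x)]) (abs_nonneg _)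
    exact eexp_le_eexp.2 (by nlinarith)
  calc eLpNorm g q (volume.restrict (Iio z))
      ≤ K * eexp (-(ε / 2) * max (x - z) 0) *
          eLpNorm (fun y => eexp (-(ε / 2) * |y - x|)) q volume := by
        rw [← eLpNorm_const_mul_ennreal (ENNReal.mul_ne_top hK (eexp_ne_top _))]
        exact (eLpNorm_restrict_mono_ennreal measurableSet_Iio hdecay).trans
          (eLpNorm_mono_measure _ Measure.restrict_le_self)
    _ ≤ K * eexp (-(ε / 2) * max (x - z) 0) * C := by gcongr; exact hle x
    _ = C * K * eexp (-(ε / 2) * max (x - z) 0) := by ring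

lemma exists_eLpNorm_mul_eexp_le_tailNorm (hβ : HasCoarseSlope 0 β) (hr : r ≠ 0) {ε : ℝ}
    (hε : 0 < ε) :
    ∃ C ≠ ∞, ∀ x,
      eLpNorm (fun z => eexp (β z) * eexp (-ε * max (x - z) 0)) r volume ≤ C * tailNorm r β x := by
  obtain ⟨C, hC, hpt⟩ := hβ.exists_eexp_le_tailNorm hr
  obtain ⟨C', hC', hint⟩ := hβ.exists_eLpNorm_mul_eexp_le hε r
  refine ⟨2 ^ r⁻¹.toReal * (C' * C + 1), by finiteness, fun x => ?_⟩
  set g : ℝ → ℝ≥0∞ := fun z => eexp (β z) * eexp (-ε * max (x - z) 0)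
  have hleft : eLpNorm g r (volume.restrict (Iic x)) ≤ C' * C * tailNorm r β x := by
    calc eLpNorm g r (volume.restrict (Iic x))
        ≤ eLpNorm (fun z => eexp (β z) * eexp (-ε * |z - x|)) r volume := by
          refine (eLpNorm_restrict_mono_ennreal measurableSet_Iic fun z hz => ?_).trans
            (eLpNorm_mono_measure _ Measure.restrict_le_self)
          rw [abs_sub_comm, abs_of_nonneg (sub_nonneg.2 (mem_Iic.1 hz)),
            ← max_eq_left (sub_nonneg.2 (mem_Iic.1 hz))]
      _ ≤ C' * (C * tailNorm r β x) := (hint x).trans (by gcongr; exact hpt x)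
      _ = C' * C * tailNorm r β x := (mul_assoc ..).symm
  have hright : eLpNorm g r (volume.restrict (Ioi x)) ≤ tailNorm r β x :=
    eLpNorm_restrict_mono_ennreal measurableSet_Ioi fun z hz => by
      simp only [g, max_eq_right (sub_nonpos.2 (mem_Ioi.1 hz).le), mul_zero, eexp_zero, mul_one,
        le_refl]
  calc eLpNorm g r volume
      ≤ 2 ^ r⁻¹.toReal *
          (eLpNorm g r (volume.restrict (Iic x)) + eLpNorm g r (volume.restrict (Ioi x))) := by
        simpa only [Iic_union_Ioi, Measure.restrict_univ] using
          eLpNorm_restrict_union_le (μ := volume) r (Iic x) (Ioi x) g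
    _ ≤ 2 ^ r⁻¹.toReal * (C' * C * tailNorm r β x + tailNorm r β x) := by gcongr
    _ = 2 ^ r⁻¹.toReal * (C' * C + 1) * tailNorm r β x := by ring

lemma exists_limNorm_le_of_decay (hβ : HasCoarseSlope 0 β) (hω : HasCoarseSlope (-σ) ω)
    (hr : r ≠ 0) (q : ℝ≥0∞) (htail : ∀ x, tailNorm r β x ≠ ∞) {ε : ℝ} (hε : 0 < ε) :
    ∃ C ≠ ∞, ∀ φ x, ∀ M ≠ ∞, (∀ y, φ y ≤ M * eexp (σ * (y - x) - ε * |y - x|)) →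
      limNorm r q β ω φ ≤ C * M * eexp (limWeight r β ω x) := by
  obtain ⟨C₁, hC₁, hpeak⟩ := exists_eexp_mul_le_of_decay hω hε
  obtain ⟨C₂, hC₂, hinner⟩ := exists_eLpNorm_Iio_le_of_decay (half_pos hε) q
  obtain ⟨C₃, hC₃, houter⟩ := exists_eLpNorm_mul_eexp_le_tailNorm hβ hr (half_pos (half_pos hε))
  refine ⟨C₁ * C₂ * C₃, by finiteness, fun φ x M hM hφ => ?_⟩
  have hK : C₁ * M * eexp (ω x) ≠ ∞ := by finiteness [eexp_ne_top (ω x)]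
  have hK' : C₂ * (C₁ * M * eexp (ω x)) ≠ ∞ := ENNReal.mul_ne_top hC₂ hK
  calc limNorm r q β ω φ
      ≤ C₂ * (C₁ * M * eexp (ω x)) *
          eLpNorm (fun z => eexp (β z) * eexp (-(ε / 2 / 2) * max (x - z) 0)) r volume := by
        rw [← eLpNorm_const_mul_ennreal hK']
        refine eLpNorm_mono_ennreal fun z => ?_
        rw [mul_left_comm]
        gcongr
        exact hinner _ x _ hK (hpeak φ x M hφ) z
    _ ≤ C₂ * (C₁ * M * eexp (ω x)) * (C₃ * tailNorm r β x) := by gcongr; exact houter x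
    _ = C₁ * C₂ * C₃ * M * eexp (limWeight r β ω x) := by
        rw [hβ.eexp_limWeight hr (htail x)]; ring

lemma isOfClass_limNorm (hβ : HasCoarseSlope 0 β) (hω : HasCoarseSlope (-σ) ω)
    (hr : r ≠ 0) (hq : q ≠ 0) (htail : ∀ x, tailNorm r β x ≠ ∞) :
    IsOfClass σ (limWeight r β ω) (limNorm r q β ω) where
  exists_eexp_mul_le := exists_eexp_mul_le_limNorm hβ hω hr hq htail
  exists_le_mul_eexp _ hε := exists_limNorm_le_of_decay hβ hω hr q htail hε

end LimNorm

/-! ### The logarithmic change of variables -/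

lemma exp_image_exp_preimage {s : Set ℝ} (hs : s ⊆ Ioi 0) : Real.exp '' (Real.exp ⁻¹' s) = s := by
  rw [image_preimage_eq_iff, Real.range_exp]
  exact hs

lemma volume_exp_preimage_eq_zero {s : Set ℝ} (hs : s ⊆ Ioi 0) :
    volume (Real.exp ⁻¹' s) = 0 ↔ volume s = 0 := by
  constructor <;> intro h0
  · rw [← exp_image_exp_preimage hs]
    exact addHaar_image_eq_zero_of_differentiableOn_of_addHaar_eq_zero volume
      Real.differentiable_exp.differentiableOn h0
  · refine measure_mono_null (t := Real.log '' s) (fun x hx => ⟨Real.exp x, hx, Real.log_exp x⟩)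
      (addHaar_image_eq_zero_of_differentiableOn_of_addHaar_eq_zero volume
        (Real.differentiableOn_log.mono fun t ht => (hs ht).ne') h0)

lemma LqNorm_eq_eLpNorm_comp_exp {q : ℝ≥0∞} (hq : q ≠ 0) {s : Set ℝ} (hs : MeasurableSet s)
    (hs0 : s ⊆ Ioi 0) (g : ℝ → ℝ≥0∞) :
    LqNorm q s g = eLpNorm (fun x => eexp (q⁻¹.toReal * x) * g (Real.exp x)) q
      (volume.restrict (Real.exp ⁻¹' s)) := by
  have hpre : MeasurableSet (Real.exp ⁻¹' s) := Real.measurable_exp hs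
  rcases eq_or_ne q ∞ with rfl | htop
  · simp only [LqNorm, if_true, ENNReal.inv_top, ENNReal.toReal_zero, zero_mul, eexp_zero, one_mul,
      eLpNorm_top_ennreal, essSup_eq_sInf, Measure.restrict_apply' hs, Measure.restrict_apply' hpre]
    congr 1 with c
    exact (volume_exp_preimage_eq_zero (inter_subset_right.trans hs0)).symm
  have hq0 : q.toReal ≠ 0 := (ENNReal.toReal_pos hq htop).ne'
  have hint : ∫⁻ u in s, g u ^ q.toReal =
      ∫⁻ x in Real.exp ⁻¹' s, (eexp (q⁻¹.toReal * x) * g (Real.exp x)) ^ q.toReal := by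
    nth_rw 1 [← exp_image_exp_preimage hs0]
    rw [lintegral_image_eq_lintegral_abs_deriv_mul hpre
      (fun x _ => (Real.hasDerivAt_exp x).hasDerivWithinAt) Real.exp_injective.injOn]
    refine lintegral_congr fun x => ?_
    rw [abs_of_pos (Real.exp_pos x), ENNReal.mul_rpow_of_nonneg _ _ toReal_nonneg, eexp_rpow,
      ENNReal.toReal_inv, mul_inv_cancel_left₀ hq0, eexp]
  rw [LqNorm, if_neg htop, hint, eLpNorm_ennreal_eq hq htop, ENNReal.toReal_inv]

lemma exp_preimage_Ioi_zero : Real.exp ⁻¹' Ioi 0 = univ := by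
  ext x; simp [Real.exp_pos]

lemma exp_preimage_Ioi_exp (x : ℝ) : Real.exp ⁻¹' Ioi (Real.exp x) = Ioi x := by
  ext y; simp

lemma exp_preimage_Ioo_zero_exp (x : ℝ) : Real.exp ⁻¹' Ioo 0 (Real.exp x) = Iio x := by
  ext y; simp [Real.exp_pos]

lemma eLpNorm_comp_neg_restrict (q : ℝ≥0∞) (s : Set ℝ) (g : ℝ → ℝ≥0∞) :
    eLpNorm (fun x => g (-x)) q (volume.restrict (-s)) = eLpNorm g q (volume.restrict s) := by
  have hneg : MeasurableEmbedding (Neg.neg : ℝ → ℝ) := (MeasurableEquiv.neg ℝ).measurableEmbedding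
  have hpres : MeasurePreserving (Neg.neg : ℝ → ℝ) (volume.restrict (-s)) (volume.restrict s) :=
    (Measure.measurePreserving_neg volume).restrict_preimage_emb hneg s
  rw [← hpres.map_eq, hneg.eLpNorm_map_measure]
  rfl

lemma eLpNorm_comp_neg (q : ℝ≥0∞) (g : ℝ → ℝ≥0∞) :
    eLpNorm (fun x => g (-x)) q volume = eLpNorm g q volume := by
  simpa only [neg_univ, Measure.restrict_univ] using eLpNorm_comp_neg_restrict q univ g

/-- The weight `t ^ (-θ) * b t`, logarithmically in both coordinates: its logarithm at
`t = exp x`. It is meaningful for `b` positive on `(0, ∞)`. -/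
def logWeight (θ : ℝ) (b : ℝ → ℝ) (x : ℝ) : ℝ := -θ * x + Real.log (b (Real.exp x))

/-- A pointwise form of slow variation: `b` is positive on `(0, ∞)` and `log ∘ b ∘ exp` grows
slower than any linear function, at all scales. -/
structure CoarselySlowlyVarying (b : ℝ → ℝ) : Prop where
  pos : ∀ x, 0 < b (Real.exp x)
  hasCoarseSlope : HasCoarseSlope 0 fun x => Real.log (b (Real.exp x))

lemma EquivOn.exists_le_mul {s : Set ℝ} {f g : ℝ → ℝ} (h : EquivOn s f g) :
    ∃ C, 0 < C ∧ ∀ t ∈ s, ∀ u ∈ s, g t ≤ g u → f t ≤ C * f u := by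
  obtain ⟨C, hC, hfg⟩ := h
  refine ⟨C * C, by positivity, fun t ht u hu htu => ?_⟩
  calc f t ≤ C * g t := (hfg t ht).2
    _ ≤ C * (C * f u) := by gcongr; exact htu.trans ((inv_mul_le_iff₀ hC).1 (hfg u hu).1)
    _ = C * C * f u := (mul_assoc ..).symm

lemma EquivOn.exists_log_sub_log_le {b g : ℝ → ℝ} {ε : ℝ}
    (h : EquivOn (Ioi 0) (fun t => t ^ ε * b t) g) (hb : ∀ t ∈ Ioi (0 : ℝ), 0 < b t) :
    ∃ B, ∀ x y, g (Real.exp x) ≤ g (Real.exp y) →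
      Real.log (b (Real.exp x)) - Real.log (b (Real.exp y)) ≤ ε * (y - x) + B := by
  obtain ⟨C, hC, hle⟩ := h.exists_le_mul
  refine ⟨Real.log C, fun x y hxy => ?_⟩
  have hx := hb _ (Real.exp_pos x)
  have hy := hb _ (Real.exp_pos y)
  have hlog := Real.log_le_log (by positivity) (hle _ (Real.exp_pos x) _ (Real.exp_pos y) hxy)
  rw [Real.log_mul (by positivity) hx.ne', Real.log_mul hC.ne' (by positivity),
    Real.log_mul (by positivity) hy.ne', ← Real.exp_mul, ← Real.exp_mul, Real.log_exp,
    Real.log_exp] at hlog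
  linarith

lemma SlowlyVarying.coarselySlowlyVarying {b : ℝ → ℝ} (h : SlowlyVarying b) :
    CoarselySlowlyVarying b where
  pos x := h.2.1 _ (Real.exp_pos x)
  hasCoarseSlope ε hε := by
    obtain ⟨-, hpos, hsv⟩ := h
    obtain ⟨⟨g, hg, hbg⟩, g', hg', hbg'⟩ := hsv ε hε
    obtain ⟨B, hB⟩ := hbg.exists_log_sub_log_le hpos
    obtain ⟨B', hB'⟩ := hbg'.exists_log_sub_log_le hpos
    have hle : ∀ x y, x ≤ y → |Real.log (b (Real.exp y)) - Real.log (b (Real.exp x))| ≤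
        ε * (y - x) + max B B' := fun x y hxy => by
      have hexp := Real.exp_le_exp.2 hxy
      rw [abs_sub_le_iff]
      exact ⟨by linarith [hB' y x (hg' (Real.exp_pos x) (Real.exp_pos y) hexp), le_max_right B B'],
        by linarith [hB x y (hg (Real.exp_pos x) (Real.exp_pos y) hexp), le_max_left B B']⟩
    refine ⟨max B B', fun x y => ?_⟩
    rw [zero_mul, sub_zero]
    rcases le_total x y with hxy | hxy
    · rw [abs_of_nonneg (sub_nonneg.2 hxy)]
      exact hle x y hxy
    · rw [abs_sub_comm, abs_sub_comm y x, abs_of_nonneg (sub_nonneg.2 hxy)]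
      exact hle y x hxy

lemma CoarselySlowlyVarying.div {a b : ℝ → ℝ} (hb : CoarselySlowlyVarying b)
    (ha : CoarselySlowlyVarying a) : CoarselySlowlyVarying (fun t => b t / a t) where
  pos x := div_pos (hb.pos x) (ha.pos x)
  hasCoarseSlope := by
    simpa only [sub_zero, Real.log_div (hb.pos _).ne' (ha.pos _).ne'] using
      hb.hasCoarseSlope.sub ha.hasCoarseSlope

lemma CoarselySlowlyVarying.hasCoarseSlope_logWeight {b : ℝ → ℝ} (hb : CoarselySlowlyVarying b)
    (θ : ℝ) : HasCoarseSlope (-θ) (logWeight θ b) :=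
  add_zero (-θ) ▸ (HasCoarseSlope.linear (-θ)).add hb.hasCoarseSlope

lemma logWeight_zero (b : ℝ → ℝ) : logWeight 0 b = fun x => Real.log (b (Real.exp x)) := by
  funext x
  rw [logWeight, neg_zero, zero_mul, zero_add]

section LqNorm

variable {b : ℝ → ℝ} {r q : ℝ≥0∞}

lemma LqNorm_rpow_mul (hb : ∀ x, 0 < b (Real.exp x)) (hq : q ≠ 0) {s : Set ℝ}
    (hs : MeasurableSet s) (hs0 : s ⊆ Ioi 0) (θ : ℝ) (h : ℝ → ℝ≥0∞) :
    LqNorm q s (fun u => ENNReal.ofReal (u ^ (-θ - q⁻¹.toReal) * b u) * h u) =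
      eLpNorm (fun x => eexp (logWeight θ b x) * h (Real.exp x)) q
        (volume.restrict (Real.exp ⁻¹' s)) := by
  rw [LqNorm_eq_eLpNorm_comp_exp hq hs hs0]
  congr 1 with x
  have hbx : ENNReal.ofReal (b (Real.exp x)) = eexp (Real.log (b (Real.exp x))) := by
    rw [eexp, Real.exp_log (hb x)]
  rw [ENNReal.ofReal_mul (Real.rpow_nonneg (Real.exp_pos x).le _), hbx,
    ← Real.exp_mul, ← eexp, ← mul_assoc, ← mul_assoc, ← eexp_add, ← eexp_add, logWeight]
  ring_nf

lemma LqNorm_Ioi_svWgt (hb : ∀ x, 0 < b (Real.exp x)) (hr : r ≠ 0) (x : ℝ) :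
    LqNorm r (Ioi (Real.exp x)) (svWgt r b) = tailNorm r (logWeight 0 b) x := by
  have h := LqNorm_rpow_mul hb hr measurableSet_Ioi
    (Ioi_subset_Ioi (Real.exp_pos x).le) 0 fun _ => 1
  unfold svWgt tailNorm
  simpa only [neg_zero, zero_sub, mul_one, exp_preimage_Ioi_exp] using h

lemma LqNorm_Ioo_svWgt (hb : ∀ x, 0 < b (Real.exp x)) (hr : r ≠ 0) (x : ℝ) :
    LqNorm r (Ioo 0 (Real.exp x)) (svWgt r b) =
      tailNorm r (fun x => logWeight 0 b (-x)) (-x) := by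
  have h := LqNorm_rpow_mul hb hr measurableSet_Ioo (s := Ioo 0 (Real.exp x))
    Ioo_subset_Ioi_self 0 fun _ => 1
  rw [exp_preimage_Ioo_zero_exp, ← eLpNorm_comp_neg_restrict, neg_Iio] at h
  unfold svWgt tailNorm
  simpa only [neg_zero, zero_sub, mul_one] using h

end LqNorm

section KMethod

variable {V : Type*} [AddCommGroup V] (N₀ N₁ : V → ℝ≥0∞) {a b : ℝ → ℝ} {r q : ℝ≥0∞}

/-- The K-functional of `f` in the logarithmic coordinate. -/
def logK (f : V) (x : ℝ) : ℝ≥0∞ :=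
  Kf N₀ N₁ (Real.exp x) f

/-- The quasi-norm that the K-method with parameter `Φ`, a functional on functions of `log t`,
defines from the couple with quasi-norms `N₀`, `N₁`. -/
def kMethod (Φ : (ℝ → ℝ≥0∞) → ℝ≥0∞) (f : V) : ℝ≥0∞ :=
  Φ (logK N₀ N₁ f)

lemma normK_eq_kMethod (hb : ∀ x, 0 < b (Real.exp x)) (hq : q ≠ 0) (θ : ℝ) :
    normK N₀ N₁ θ q b =
      kMethod N₀ N₁ fun φ => eLpNorm (fun x => eexp (logWeight θ b x) * φ x) q volume := by
  funext f
  rw [normK, LqNorm_rpow_mul hb hq measurableSet_Ioi subset_rfl, exp_preimage_Ioi_zero,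
    Measure.restrict_univ]
  rfl

lemma normL_eq_kMethod (hb : ∀ x, 0 < b (Real.exp x)) (ha : ∀ x, 0 < a (Real.exp x))
    (hr : r ≠ 0) (hq : q ≠ 0) (σ : ℝ) :
    normL N₀ N₁ σ r q b a =
      kMethod N₀ N₁ (limNorm r q (logWeight 0 fun t => b t / a t) (logWeight σ a)) := by
  funext f
  have houter := LqNorm_rpow_mul (b := fun t => b t / a t) (fun x => div_pos (hb x) (ha x)) hr
    measurableSet_Ioi subset_rfl 0 fun t => LqNorm q (Ioo 0 t) fun u =>
      ENNReal.ofReal (u ^ (-σ - q⁻¹.toReal) * a u) * Kf N₀ N₁ u f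
  rw [exp_preimage_Ioi_zero, Measure.restrict_univ, neg_zero, zero_sub] at houter
  rw [normL, houter, kMethod, limNorm]
  congr 1 with x
  rw [LqNorm_rpow_mul ha hq measurableSet_Ioo Ioo_subset_Ioi_self, exp_preimage_Ioo_zero_exp]
  rfl

lemma normR_eq_kMethod (hb : ∀ x, 0 < b (Real.exp x)) (ha : ∀ x, 0 < a (Real.exp x))
    (hr : r ≠ 0) (hq : q ≠ 0) (σ : ℝ) :
    normR N₀ N₁ σ r q b a = kMethod N₀ N₁ fun φ =>
      limNorm r q (fun x => logWeight 0 (fun t => b t / a t) (-x)) (fun x => logWeight σ a (-x))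
        fun x => φ (-x) := by
  funext f
  have houter := LqNorm_rpow_mul (b := fun t => b t / a t) (fun x => div_pos (hb x) (ha x)) hr
    measurableSet_Ioi subset_rfl 0 fun t => LqNorm q (Ioi t) fun u =>
      ENNReal.ofReal (u ^ (-σ - q⁻¹.toReal) * a u) * Kf N₀ N₁ u f
  rw [exp_preimage_Ioi_zero, Measure.restrict_univ, neg_zero, zero_sub, ← eLpNorm_comp_neg]
    at houter
  rw [normR, houter, kMethod, limNorm]
  congr 1 with x
  rw [LqNorm_rpow_mul ha hq measurableSet_Ioi (Ioi_subset_Ioi (Real.exp_pos _).le),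
    exp_preimage_Ioi_exp, ← eLpNorm_comp_neg_restrict, neg_Ioi, neg_neg]
  rfl

end KMethod

/-! ### Reiteration -/

lemma equivNorms_of_exists_le {V : Type*} {nX nY : V → ℝ≥0∞} (hXY : ∃ C ≠ ∞, ∀ f, nX f ≤ C * nY f)
    (hYX : ∃ C ≠ ∞, ∀ f, nY f ≤ C * nX f) : EquivNorms nX nY := by
  obtain ⟨C, hC, hle⟩ := hXY
  obtain ⟨C', hC', hle'⟩ := hYX
  have htop : C + C' + 1 ≠ ∞ := by finiteness
  refine ⟨C + C' + 1, by simp, htop, fun f => ⟨?_, (hle f).trans ?_⟩⟩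
  · rw [ENNReal.inv_mul_le_iff (by simp) htop]
    exact (hle' f).trans (by gcongr; exact le_add_right le_add_self)
  · gcongr
    exact le_add_right le_self_add

section Reiteration

variable {V : Type*} [AddCommGroup V]

/-- The properties of a quasi-seminorm on an abelian group, homogeneity excepted. -/
structure IsQuasiSeminorm (N : V → ℝ≥0∞) : Prop where
  map_zero : N 0 = 0
  map_neg : ∀ f, N (-f) = N f
  exists_add_le : ∃ C ≠ ∞, ∀ f g, N (f + g) ≤ C * (N f + N g)

lemma QuasiBanach.isQuasiSeminorm [Module ℝ V] (A : QuasiBanach V) : IsQuasiSeminorm A.N where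
  map_zero := A.zero
  map_neg f := by simpa using A.smul (-1) f
  exists_add_le := A.quasi.imp fun _ h => ⟨h.2.1, h.2.2⟩

variable {N₀ N₁ : V → ℝ≥0∞}

lemma logK_le (N₀ N₁ : V → ℝ≥0∞) (f g : V) (x : ℝ) :
    logK N₀ N₁ f x ≤ N₀ g + eexp x * N₁ (f - g) :=
  iInf_le _ g

lemma IsQuasiSeminorm.logK_le_left (h₁ : IsQuasiSeminorm N₁) (f : V) (x : ℝ) :
    logK N₀ N₁ f x ≤ N₀ f := by
  simpa only [sub_self, h₁.map_zero, mul_zero, add_zero] using logK_le N₀ N₁ f f x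

lemma IsQuasiSeminorm.logK_le_right (h₀ : IsQuasiSeminorm N₀) (f : V) (x : ℝ) :
    logK N₀ N₁ f x ≤ eexp x * N₁ f := by
  simpa only [sub_zero, h₀.map_zero, zero_add] using logK_le N₀ N₁ f 0 x

lemma coarselyLogLipschitz_logK (N₀ N₁ : V → ℝ≥0∞) (f : V) :
    CoarselyLogLipschitz 1 (logK N₀ N₁ f) := fun x y => by
  change logK N₀ N₁ f x ≤ _ * ⨅ g, N₀ g + eexp y * N₁ (f - g)
  rw [ENNReal.mul_iInf_of_ne (eexp_ne_zero _) (eexp_ne_top _)]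
  refine le_iInf fun g => (logK_le N₀ N₁ f g x).trans ?_
  rw [mul_add, ← mul_assoc, ← eexp_add]
  gcongr
  · exact le_mul_of_one_le_left' (one_le_eexp (by positivity))
  · exact eexp_le_eexp.2 (by linarith [le_abs_self (x - y)])

lemma IsQuasiSeminorm.exists_logK_add_le (h₀ : IsQuasiSeminorm N₀) (h₁ : IsQuasiSeminorm N₁) :
    ∃ C ≠ ∞, ∀ f g x, logK N₀ N₁ (f + g) x ≤ C * (logK N₀ N₁ f x + logK N₀ N₁ g x) := by
  obtain ⟨C₀, hC₀, hadd₀⟩ := h₀.exists_add_le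
  obtain ⟨C₁, hC₁, hadd₁⟩ := h₁.exists_add_le
  refine ⟨C₀ + C₁ + 1, by finiteness, fun f g x => ?_⟩
  have hne : C₀ + C₁ + 1 ≠ 0 := by simp
  rw [← ENNReal.inv_mul_le_iff hne (by finiteness)]
  refine ENNReal.le_iInf_add_iInf fun u v => ?_
  rw [ENNReal.inv_mul_le_iff hne (by finiteness)]
  calc logK N₀ N₁ (f + g) x
      ≤ N₀ (u + v) + eexp x * N₁ (f - u + (g - v)) := by
        rw [← add_sub_add_comm]; exact logK_le N₀ N₁ _ _ x
    _ ≤ C₀ * (N₀ u + N₀ v) + eexp x * (C₁ * (N₁ (f - u) + N₁ (g - v))) := by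
        gcongr
        exacts [hadd₀ _ _, hadd₁ _ _]
    _ ≤ (C₀ + C₁ + 1) * (N₀ u + N₀ v) +
          eexp x * ((C₀ + C₁ + 1) * (N₁ (f - u) + N₁ (g - v))) := by
        gcongr
        · exact le_add_right le_self_add
        · exact le_add_right le_add_self
    _ = (C₀ + C₁ + 1) * (N₀ u + eexp x * N₁ (f - u) + (N₀ v + eexp x * N₁ (g - v))) := by
        ring

lemma IsQuasiSeminorm.exists_logK_sub_le (h₀ : IsQuasiSeminorm N₀) (h₁ : IsQuasiSeminorm N₁) :
    ∃ C ≠ ∞, ∀ f g x, logK N₀ N₁ (f - g) x ≤ C * (logK N₀ N₁ f x + logK N₀ N₁ g x) := by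
  obtain ⟨C, hC, hadd⟩ := h₀.exists_logK_add_le h₁
  refine ⟨C, hC, fun f g x => ?_⟩
  have hneg : logK N₀ N₁ (-g) x = logK N₀ N₁ g x := by
    refine (Equiv.neg V).iInf_congr fun u => ?_
    rw [Equiv.neg_apply, h₀.map_neg, ← h₁.map_neg (g - -u)]
    congr 3
    abel
  simpa only [sub_eq_add_neg, hneg] using hadd f (-g) x

lemma le_mul_eexp_of_le_mul_add {C X k k₁ k₂ : ℝ≥0∞} {s₁ s₂ t : ℝ} (hk : k ≤ C * (k₁ + k₂))
    (hk₁ : k₁ ≤ X * eexp s₁) (hk₂ : k₂ ≤ X * eexp s₂) (hs₁ : s₁ ≤ t) (hs₂ : s₂ ≤ t) :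
    k ≤ (2 * C + 1) * X * eexp t := by
  calc k ≤ C * (X * eexp s₁ + X * eexp s₂) := by grw [hk, hk₁, hk₂]
    _ ≤ C * (X * eexp t + X * eexp t) := by
        gcongr
        exacts [eexp_le_eexp.2 hs₁, eexp_le_eexp.2 hs₂]
    _ = 2 * C * X * eexp t := by ring
    _ ≤ (2 * C + 1) * X * eexp t := by gcongr; exact le_self_add

/-- A decomposition of `f` nearly optimal at one point `x` is as good as the growth of the
K-functional of `f` around `x` allows at every other point. -/
lemma IsQuasiSeminorm.exists_decomposition (h₀ : IsQuasiSeminorm N₀) (h₁ : IsQuasiSeminorm N₁)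
    {σ₀ σ₁ η ε : ℝ} (hε : 0 ≤ ε) (hσ₀ : ε ≤ σ₀) (hη : σ₀ + ε ≤ η - ε) (hη' : η + ε ≤ σ₁ - ε)
    (hσ₁ : σ₁ + ε ≤ 1) :
    ∃ C ≠ ∞, ∀ f x X, logK N₀ N₁ f x < X →
      (∀ y, logK N₀ N₁ f y ≤ X * eexp (η * (y - x) + ε * |y - x|)) →
      ∃ g, (∀ y, logK N₀ N₁ g y ≤ C * X * eexp (σ₀ * (y - x) - ε * |y - x|)) ∧
        ∀ y, logK N₀ N₁ (f - g) y ≤ C * X * eexp (σ₁ * (y - x) - ε * |y - x|) := by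
  obtain ⟨C, hC, hsub⟩ := h₀.exists_logK_sub_le h₁
  refine ⟨2 * C + 1, by finiteness, fun f x X hX hf => ?_⟩
  obtain ⟨g, hg⟩ := iInf_lt_iff.1 hX
  have hg₀ : N₀ g ≤ X := le_self_add.trans hg.le
  have hg₁ : eexp x * N₁ (f - g) ≤ X := le_add_self.trans hg.le
  have hg₁' (y : ℝ) : eexp y * N₁ (f - g) ≤ X * eexp (y - x) := by
    calc eexp y * N₁ (f - g) = eexp x * N₁ (f - g) * eexp (y - x) := by
          rw [mul_right_comm, ← eexp_add, add_sub_cancel]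
      _ ≤ X * eexp (y - x) := by gcongr
  have direct {k : ℝ≥0∞} {s t : ℝ} (hk : k ≤ X * eexp s) (hst : s ≤ t) :
      k ≤ (2 * C + 1) * X * eexp t := by
    rw [mul_assoc]
    exact le_mul_of_one_le_of_le le_add_self (hk.trans (by gcongr; exact eexp_le_eexp.2 hst))
  refine ⟨g, fun y => ?_, fun y => ?_⟩ <;> rcases le_total x y with hxy | hyx
  · have := abs_of_nonneg (sub_nonneg.2 hxy)
    refine direct (s := 0)
      (by simpa only [eexp_zero, mul_one] using (h₁.logK_le_left g y).trans hg₀) ?_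
    nlinarith
  · have := abs_of_nonpos (sub_nonpos.2 hyx)
    refine le_mul_eexp_of_le_mul_add (k₂ := logK N₀ N₁ (f - g) y)
      (by simpa using hsub f (f - g) y) (hf y)
      ((h₀.logK_le_right _ y).trans (hg₁' y)) ?_ ?_ <;> nlinarith
  · have := abs_of_nonneg (sub_nonneg.2 hxy)
    refine le_mul_eexp_of_le_mul_add (s₂ := 0) (hsub f g y) (hf y)
      (by simpa only [eexp_zero, mul_one] using (h₁.logK_le_left g y).trans hg₀) ?_ ?_ <;> nlinarith
  · have := abs_of_nonpos (sub_nonpos.2 hyx)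
    refine direct ((h₀.logK_le_right _ y).trans (hg₁' y)) ?_
    nlinarith

variable {Φ₀ Φ₁ : (ℝ → ℝ≥0∞) → ℝ≥0∞} {σ₀ σ₁ : ℝ} {ν₀ ν₁ : ℝ → ℝ}

lemma IsOfClass.exists_eexp_mul_logK_le (hΦ₀ : IsOfClass σ₀ ν₀ Φ₀) (hΦ₁ : IsOfClass σ₁ ν₁ Φ₁)
    (h₀ : IsQuasiSeminorm N₀) (h₁ : IsQuasiSeminorm N₁) :
    ∃ C ≠ ∞, ∀ f x, eexp (ν₀ x) * logK N₀ N₁ f x ≤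
      C * logK (kMethod N₀ N₁ Φ₀) (kMethod N₀ N₁ Φ₁) f (ν₀ x - ν₁ x) := by
  obtain ⟨C, hC, hadd⟩ := h₀.exists_logK_add_le h₁
  obtain ⟨C₀, hC₀, hle₀⟩ := hΦ₀.exists_eexp_mul_le
  obtain ⟨C₁, hC₁, hle₁⟩ := hΦ₁.exists_eexp_mul_le
  refine ⟨C * (C₀ + C₁) + 1, by finiteness, fun f x => ?_⟩
  rw [← ENNReal.inv_mul_le_iff (by simp) (by finiteness)]
  refine le_iInf fun g => ?_
  rw [ENNReal.inv_mul_le_iff (by simp) (by finiteness)]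
  change _ ≤ _ * (kMethod N₀ N₁ Φ₀ g + eexp (ν₀ x - ν₁ x) * kMethod N₀ N₁ Φ₁ (f - g))
  set k₀ := kMethod N₀ N₁ Φ₀ g
  set k₁ := kMethod N₀ N₁ Φ₁ (f - g)
  calc eexp (ν₀ x) * logK N₀ N₁ f x
      ≤ eexp (ν₀ x) * (C * (logK N₀ N₁ g x + logK N₀ N₁ (f - g) x)) := by
        gcongr
        simpa only [add_sub_cancel] using hadd g (f - g) x
    _ = C * (eexp (ν₀ x) * logK N₀ N₁ g x +
          eexp (ν₀ x - ν₁ x) * (eexp (ν₁ x) * logK N₀ N₁ (f - g) x)) := by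
        rw [← mul_assoc (eexp _) (eexp _), ← eexp_add, sub_add_cancel]; ring
    _ ≤ C * (C₀ * k₀ + eexp (ν₀ x - ν₁ x) * (C₁ * k₁)) := by
        gcongr C * (?_ + eexp (ν₀ x - ν₁ x) * ?_)
        exacts [hle₀ _ (coarselyLogLipschitz_logK N₀ N₁ g) x,
          hle₁ _ (coarselyLogLipschitz_logK N₀ N₁ (f - g)) x]
    _ ≤ C * ((C₀ + C₁) * k₀ + eexp (ν₀ x - ν₁ x) * ((C₀ + C₁) * k₁)) := by
        gcongr
        exacts [le_self_add, le_add_self]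
    _ = C * (C₀ + C₁) * (k₀ + eexp (ν₀ x - ν₁ x) * k₁) := by ring
    _ ≤ (C * (C₀ + C₁) + 1) * (k₀ + eexp (ν₀ x - ν₁ x) * k₁) := by gcongr; exact le_self_add

lemma IsOfClass.exists_logK_le (hΦ₀ : IsOfClass σ₀ ν₀ Φ₀) (hΦ₁ : IsOfClass σ₁ ν₁ Φ₁)
    (h₀ : IsQuasiSeminorm N₀) (h₁ : IsQuasiSeminorm N₁) {η ε : ℝ} (hε : 0 < ε) (hσ₀ : ε ≤ σ₀)
    (hη : σ₀ + ε ≤ η - ε) (hη' : η + ε ≤ σ₁ - ε) (hσ₁ : σ₁ + ε ≤ 1) :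
    ∃ C ≠ ∞, ∀ f x M, (∀ y, logK N₀ N₁ f y ≤ M * eexp (η * (y - x) + ε * |y - x|)) →
      logK (kMethod N₀ N₁ Φ₀) (kMethod N₀ N₁ Φ₁) f (ν₀ x - ν₁ x) ≤ C * M * eexp (ν₀ x) := by
  obtain ⟨C, hC, hdec⟩ := h₀.exists_decomposition h₁ hε.le hσ₀ hη hη' hσ₁
  obtain ⟨C₀, hC₀, hle₀⟩ := hΦ₀.exists_le_mul_eexp ε hε
  obtain ⟨C₁, hC₁, hle₁⟩ := hΦ₁.exists_le_mul_eexp ε hε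
  refine ⟨(C₀ + C₁) * C + 1, by finiteness, fun f x M hf => ?_⟩
  have hne : ((C₀ + C₁) * C + 1) * eexp (ν₀ x) ≠ 0 := mul_ne_zero (by simp) (eexp_ne_zero _)
  have htop : ((C₀ + C₁) * C + 1) * eexp (ν₀ x) ≠ ∞ :=
    ENNReal.mul_ne_top (by finiteness) (eexp_ne_top _)
  rw [mul_right_comm, ← ENNReal.inv_mul_le_iff hne htop]
  refine le_of_forall_gt_imp_ge_of_dense fun X hX => ?_
  obtain rfl | hX' := eq_or_ne X ∞
  · exact le_top
  rw [ENNReal.inv_mul_le_iff hne htop]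
  have hfx : logK N₀ N₁ f x ≤ M := by
    simpa only [sub_self, abs_zero, mul_zero, add_zero, eexp_zero, mul_one] using hf x
  obtain ⟨g, hg, hfg⟩ := hdec f x X (hfx.trans_lt hX) fun y => (hf y).trans (by gcongr)
  have hCX : C * X ≠ ∞ := ENNReal.mul_ne_top hC hX'
  calc logK (kMethod N₀ N₁ Φ₀) (kMethod N₀ N₁ Φ₁) f (ν₀ x - ν₁ x)
      ≤ C₀ * (C * X) * eexp (ν₀ x) +
          eexp (ν₀ x - ν₁ x) * (C₁ * (C * X) * eexp (ν₁ x)) := by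
        refine (logK_le _ _ f g _).trans ?_
        gcongr
        exacts [hle₀ _ x _ hCX hg, hle₁ _ x _ hCX hfg]
    _ = (C₀ + C₁) * C * eexp (ν₀ x) * X := by
        have hν : eexp (ν₀ x) = eexp (ν₀ x - ν₁ x) * eexp (ν₁ x) := by
          rw [← eexp_add, sub_add_cancel]
        rw [hν]
        ring
    _ ≤ ((C₀ + C₁) * C + 1) * eexp (ν₀ x) * X := by gcongr; exact le_self_add

lemma HasCoarseSlope.exists_le_mul_iSup {ω : ℝ → ℝ} {η : ℝ} (hω : HasCoarseSlope (-η) ω) {ε : ℝ}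
    (hε : 0 < ε) :
    ∃ C ≠ ∞, ∀ (k : ℝ → ℝ≥0∞) (x y : ℝ),
      k y ≤ C * eexp (-ω x) * (⨆ z, eexp (-(ε / 2) * |z - x|) * (eexp (ω z) * k z)) *
        eexp (η * (y - x) + ε * |y - x|) := by
  obtain ⟨B, hB⟩ := hω (ε / 2) (half_pos hε)
  refine ⟨eexp B, eexp_ne_top _, fun k x y => ?_⟩
  set S := ⨆ z, eexp (-(ε / 2) * |z - x|) * (eexp (ω z) * k z)
  have hexp : (1 : ℝ≥0∞) ≤ eexp B * eexp (-ω x) * eexp (η * (y - x) + ε * |y - x|) *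
      (eexp (-(ε / 2) * |y - x|) * eexp (ω y)) := by
    rw [← eexp_add, ← eexp_add, ← eexp_add, ← eexp_add]
    exact one_le_eexp (by linarith [(abs_le.1 (hB x y)).1])
  calc k y ≤ eexp B * eexp (-ω x) * eexp (η * (y - x) + ε * |y - x|) *
        (eexp (-(ε / 2) * |y - x|) * eexp (ω y)) * k y := le_mul_of_one_le_left' hexp
    _ = eexp B * eexp (-ω x) * eexp (η * (y - x) + ε * |y - x|) *
        (eexp (-(ε / 2) * |y - x|) * (eexp (ω y) * k y)) := by ring
    _ ≤ eexp B * eexp (-ω x) * eexp (η * (y - x) + ε * |y - x|) * S := by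
        gcongr
        exact le_iSup (fun z => eexp (-(ε / 2) * |z - x|) * (eexp (ω z) * k z)) y
    _ = eexp B * eexp (-ω x) * S * eexp (η * (y - x) + ε * |y - x|) := by ring

lemma IsOfClass.exists_eexp_mul_logK_comp_le (hΦ₀ : IsOfClass σ₀ ν₀ Φ₀)
    (hΦ₁ : IsOfClass σ₁ ν₁ Φ₁) (h₀ : IsQuasiSeminorm N₀) (h₁ : IsQuasiSeminorm N₁)
    (hσ₀ : 0 < σ₀) (hσ₁ : σ₁ < 1) {γ : ℝ → ℝ} {η : ℝ} (hη : σ₀ < η) (hη' : η < σ₁)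
    (hω : HasCoarseSlope (-η) fun x => ν₀ x + γ (ν₀ x - ν₁ x)) :
    ∃ δ > 0, ∃ C ≠ ∞, ∀ f x, eexp (γ (ν₀ x - ν₁ x)) *
      logK (kMethod N₀ N₁ Φ₀) (kMethod N₀ N₁ Φ₁) f (ν₀ x - ν₁ x) ≤
        C * ⨆ y, eexp (-δ * |y - x|) * (eexp (ν₀ y + γ (ν₀ y - ν₁ y)) * logK N₀ N₁ f y) := by
  obtain ⟨ε, hε, hε'⟩ : ∃ ε > 0, ε ≤ σ₀ ∧ ε ≤ 1 - σ₁ ∧ ε ≤ (η - σ₀) / 2 ∧ ε ≤ (σ₁ - η) / 2 := by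
    refine ⟨min (min σ₀ (1 - σ₁)) (min ((η - σ₀) / 2) ((σ₁ - η) / 2)), ?_, ?_⟩
    · simp only [gt_iff_lt, lt_min_iff]
      refine ⟨⟨?_, ?_⟩, ?_, ?_⟩ <;> linarith
    · simp only [← le_min_iff, min_assoc, le_refl]
  obtain ⟨C₁, hC₁, hle₁⟩ := hω.exists_le_mul_iSup hε
  obtain ⟨C₂, hC₂, hle₂⟩ := hΦ₀.exists_logK_le hΦ₁ h₀ h₁ (η := η) hε (by linarith) (by linarith)
    (by linarith) (by linarith)
  refine ⟨ε / 2, half_pos hε, C₂ * C₁, ENNReal.mul_ne_top hC₂ hC₁, fun f x => ?_⟩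
  set ω := fun x => ν₀ x + γ (ν₀ x - ν₁ x)
  set S := ⨆ y, eexp (-(ε / 2) * |y - x|) * (eexp (ω y) * logK N₀ N₁ f y)
  calc eexp (γ (ν₀ x - ν₁ x)) * logK (kMethod N₀ N₁ Φ₀) (kMethod N₀ N₁ Φ₁) f (ν₀ x - ν₁ x)
      ≤ eexp (γ (ν₀ x - ν₁ x)) * (C₂ * (C₁ * eexp (-ω x) * S) * eexp (ν₀ x)) := by
        gcongr
        exact hle₂ f x _ (hle₁ _ x)
    _ = C₂ * C₁ * S * (eexp (-ω x) * eexp (ω x)) := by rw [eexp_add (ν₀ x)]; ring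
    _ = C₂ * C₁ * S := by rw [eexp_neg_mul_eexp, mul_one]

lemma IsOfClass.equivNorms_kMethod (hΦ₀ : IsOfClass σ₀ ν₀ Φ₀) (hΦ₁ : IsOfClass σ₁ ν₁ Φ₁)
    (hν₀ : HasCoarseSlope (-σ₀) ν₀) (hν₁ : HasCoarseSlope (-σ₁) ν₁) (h₀ : IsQuasiSeminorm N₀)
    (h₁ : IsQuasiSeminorm N₁) (hσ₀ : 0 < σ₀) (hσ : σ₀ < σ₁) (hσ₁ : σ₁ < 1) {γ : ℝ → ℝ} {θ : ℝ}
    (hγ : HasCoarseSlope (-θ) γ) (hθ : 0 < θ) (hθ' : θ < 1) (r : ℝ≥0∞) :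
    EquivNorms
      (kMethod (kMethod N₀ N₁ Φ₀) (kMethod N₀ N₁ Φ₁) fun φ =>
        eLpNorm (fun y => eexp (γ y) * φ y) r volume)
      (kMethod N₀ N₁ fun φ =>
        eLpNorm (fun x => eexp (ν₀ x + γ (ν₀ x - ν₁ x)) * φ x) r volume) := by
  have hκ : 0 < σ₁ - σ₀ := sub_pos.2 hσ
  have hlam : HasCoarseSlope (σ₁ - σ₀) fun x => ν₀ x - ν₁ x := by
    simpa only [neg_sub_neg] using hν₀.sub hν₁
  have hω : HasCoarseSlope (-(σ₀ + θ * (σ₁ - σ₀))) fun x => ν₀ x + γ (ν₀ x - ν₁ x) := by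
    simpa only [neg_add, neg_mul] using hν₀.add (hγ.comp hlam)
  obtain ⟨A, hA, hγA⟩ := hγ.exists_coarselyLogLipschitz
  obtain ⟨A', hA', hωA⟩ := hω.exists_coarselyLogLipschitz
  have hF (f : V) := (hγA.mul (coarselyLogLipschitz_logK (kMethod N₀ N₁ Φ₀) (kMethod N₀ N₁ Φ₁)
    f)).mono (A' := A + A' + 1) (by linarith)
  have hG (f : V) := (hωA.mul (coarselyLogLipschitz_logK N₀ N₁ f)).mono (A' := A + A' + 1)
    (by linarith)
  refine equivNorms_of_exists_le ?_ ?_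
  · obtain ⟨δ, hδ, K, hK, hle⟩ := hΦ₀.exists_eexp_mul_logK_comp_le hΦ₁ h₀ h₁ hσ₀ hσ₁
      (by nlinarith) (by nlinarith) hω
    obtain ⟨C, hC, hnorm⟩ :=
      hlam.exists_eLpNorm_le_of_comp_le_iSup hκ hδ (A := A + A' + 1) (by positivity) hK r
    exact ⟨C, hC, fun f => hnorm _ _ (hF f) (hG f) (hle f)⟩
  · obtain ⟨K, hK, hle⟩ := hΦ₀.exists_eexp_mul_logK_le hΦ₁ h₀ h₁
    obtain ⟨C, hC, hnorm⟩ :=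
      hlam.exists_eLpNorm_le_of_le_comp hκ (A := A + A' + 1) (by positivity) hK r
    refine ⟨C, hC, fun f => hnorm _ _ (hG f) (hF f) fun x => ?_⟩
    set kΦ := logK (kMethod N₀ N₁ Φ₀) (kMethod N₀ N₁ Φ₁) f
    calc eexp (ν₀ x + γ (ν₀ x - ν₁ x)) * logK N₀ N₁ f x
        = eexp (γ (ν₀ x - ν₁ x)) * (eexp (ν₀ x) * logK N₀ N₁ f x) := by rw [eexp_add]; ring
      _ ≤ eexp (γ (ν₀ x - ν₁ x)) * (K * kΦ (ν₀ x - ν₁ x)) :=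
        mul_le_mul_right (hle f x) _
      _ = K * (eexp (γ (ν₀ x - ν₁ x)) * kΦ (ν₀ x - ν₁ x)) := mul_left_comm ..

end Reiteration

/-! ### The endpoint weights `c₀`, `c₁` and the interpolated weight `a^#` -/

lemma limWeight_eq_logWeight {a c β ω : ℝ → ℝ} {r : ℝ≥0∞} {σ x y : ℝ} (ha : 0 < a (Real.exp x))
    (hβ : HasCoarseSlope 0 β) (hr : r ≠ 0) (htail : tailNorm r β y ≠ ∞)
    (hω : ω y = logWeight σ a x) (hc : c (Real.exp x) = a (Real.exp x) * (tailNorm r β y).toReal) :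
    limWeight r β ω y = logWeight σ c x := by
  have htail' : (tailNorm r β y).toReal ≠ 0 :=
    ENNReal.toReal_ne_zero.2 ⟨hβ.tailNorm_ne_zero hr y, htail⟩
  rw [limWeight, hω, logWeight, logWeight, hc, Real.log_mul ha.ne' htail', add_assoc]

namespace CoarselySlowlyVarying

variable {a b c : ℝ → ℝ} {r q : ℝ≥0∞}

lemma hasCoarseSlope_logWeight_zero (hb : CoarselySlowlyVarying b) :
    HasCoarseSlope 0 (logWeight 0 b) :=
  logWeight_zero b ▸ hb.hasCoarseSlope

lemma hasCoarseSlope_logWeight_zero_comp_neg (hb : CoarselySlowlyVarying b) :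
    HasCoarseSlope 0 (fun x => logWeight 0 b (-x)) := by
  simpa only [neg_zero] using hb.hasCoarseSlope_logWeight_zero.comp_neg

lemma tailNorm_ne_top (hb : CoarselySlowlyVarying b) (hr : r ≠ 0)
    (hfin : LqNorm r (Ioi 1) (svWgt r b) ≠ ∞) (x : ℝ) : tailNorm r (logWeight 0 b) x ≠ ∞ := by
  rw [← Real.exp_zero, LqNorm_Ioi_svWgt hb.pos hr] at hfin
  exact hb.hasCoarseSlope_logWeight_zero.tailNorm_ne_top hr hfin x

lemma tailNorm_comp_neg_ne_top (hb : CoarselySlowlyVarying b) (hr : r ≠ 0)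
    (hfin : LqNorm r (Ioo 0 1) (svWgt r b) ≠ ∞) (x : ℝ) :
    tailNorm r (fun x => logWeight 0 b (-x)) x ≠ ∞ := by
  rw [← Real.exp_zero, LqNorm_Ioo_svWgt hb.pos hr] at hfin
  exact hb.hasCoarseSlope_logWeight_zero_comp_neg.tailNorm_ne_top hr hfin x

lemma limWeight_logWeight (ha : CoarselySlowlyVarying a) (hb : CoarselySlowlyVarying b) (hr : r ≠ 0)
    (hfin : LqNorm r (Ioi 1) (svWgt r b) ≠ ∞)
    (hc : ∀ t, c t = a t * (LqNorm r (Ioi t) (svWgt r b)).toReal) (σ : ℝ) :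
    limWeight r (logWeight 0 b) (logWeight σ a) = logWeight σ c :=
  funext fun x => limWeight_eq_logWeight (ha.pos x) hb.hasCoarseSlope_logWeight_zero hr
    (hb.tailNorm_ne_top hr hfin x) rfl (by rw [hc, LqNorm_Ioi_svWgt hb.pos hr])

lemma limWeight_logWeight_comp_neg (ha : CoarselySlowlyVarying a) (hb : CoarselySlowlyVarying b)
    (hr : r ≠ 0) (hfin : LqNorm r (Ioo 0 1) (svWgt r b) ≠ ∞)
    (hc : ∀ t, c t = a t * (LqNorm r (Ioo 0 t) (svWgt r b)).toReal) (σ : ℝ) :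
    (fun x => limWeight r (fun x => logWeight 0 b (-x)) (fun x => logWeight σ a (-x)) (-x)) =
      logWeight σ c :=
  funext fun x => limWeight_eq_logWeight (ha.pos x) hb.hasCoarseSlope_logWeight_zero_comp_neg hr
    (hb.tailNorm_comp_neg_ne_top hr hfin _) (by rw [neg_neg])
    (by rw [hc, LqNorm_Ioo_svWgt hb.pos hr])

lemma mul_LqNorm_Ioi (ha : CoarselySlowlyVarying a) (hb : CoarselySlowlyVarying b) (hr : r ≠ 0)
    (hfin : LqNorm r (Ioi 1) (svWgt r b) ≠ ∞)
    (hc : ∀ t, c t = a t * (LqNorm r (Ioi t) (svWgt r b)).toReal) : CoarselySlowlyVarying c where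
  pos x := by
    rw [hc, LqNorm_Ioi_svWgt hb.pos hr]
    exact mul_pos (ha.pos x) (ENNReal.toReal_pos
      (hb.hasCoarseSlope_logWeight_zero.tailNorm_ne_zero hr x) (hb.tailNorm_ne_top hr hfin x))
  hasCoarseSlope := by
    rw [← logWeight_zero, ← ha.limWeight_logWeight hb hr hfin hc]
    exact hb.hasCoarseSlope_logWeight_zero.hasCoarseSlope_limWeight
      ha.hasCoarseSlope_logWeight_zero hr (hb.tailNorm_ne_top hr hfin)

lemma mul_LqNorm_Ioo (ha : CoarselySlowlyVarying a) (hb : CoarselySlowlyVarying b) (hr : r ≠ 0)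
    (hfin : LqNorm r (Ioo 0 1) (svWgt r b) ≠ ∞)
    (hc : ∀ t, c t = a t * (LqNorm r (Ioo 0 t) (svWgt r b)).toReal) :
    CoarselySlowlyVarying c where
  pos x := by
    rw [hc, LqNorm_Ioo_svWgt hb.pos hr]
    exact mul_pos (ha.pos x) (ENNReal.toReal_pos
      (hb.hasCoarseSlope_logWeight_zero_comp_neg.tailNorm_ne_zero hr _)
      (hb.tailNorm_comp_neg_ne_top hr hfin _))
  hasCoarseSlope := by
    rw [← logWeight_zero, ← ha.limWeight_logWeight_comp_neg hb hr hfin hc]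
    simpa only [neg_zero] using (hb.hasCoarseSlope_logWeight_zero_comp_neg.hasCoarseSlope_limWeight
      ha.hasCoarseSlope_logWeight_zero_comp_neg hr (hb.tailNorm_comp_neg_ne_top hr hfin)).comp_neg

lemma isOfClass_limNorm_logWeight (ha : CoarselySlowlyVarying a) (hb : CoarselySlowlyVarying b)
    (hr : r ≠ 0) (hq : q ≠ 0) (hfin : LqNorm r (Ioi 1) (svWgt r b) ≠ ∞)
    (hc : ∀ t, c t = a t * (LqNorm r (Ioi t) (svWgt r b)).toReal) (σ : ℝ) :
    IsOfClass σ (logWeight σ c) (limNorm r q (logWeight 0 b) (logWeight σ a)) := by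
  rw [← ha.limWeight_logWeight hb hr hfin hc]
  exact isOfClass_limNorm hb.hasCoarseSlope_logWeight_zero (ha.hasCoarseSlope_logWeight σ)
    hr hq (hb.tailNorm_ne_top hr hfin)

lemma isOfClass_limNorm_logWeight_comp_neg (ha : CoarselySlowlyVarying a)
    (hb : CoarselySlowlyVarying b) (hr : r ≠ 0) (hq : q ≠ 0)
    (hfin : LqNorm r (Ioo 0 1) (svWgt r b) ≠ ∞)
    (hc : ∀ t, c t = a t * (LqNorm r (Ioo 0 t) (svWgt r b)).toReal) (σ : ℝ) :
    IsOfClass σ (logWeight σ c) fun φ =>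
      limNorm r q (fun x => logWeight 0 b (-x)) (fun x => logWeight σ a (-x)) fun x => φ (-x) := by
  rw [← ha.limWeight_logWeight_comp_neg hb hr hfin hc]
  simpa only [neg_neg] using (isOfClass_limNorm hb.hasCoarseSlope_logWeight_zero_comp_neg
    (ha.hasCoarseSlope_logWeight σ).comp_neg hr hq (hb.tailNorm_comp_neg_ne_top hr hfin)).reflect

end CoarselySlowlyVarying

lemma exp_logWeight_sub {c₀ c₁ : ℝ → ℝ} {x : ℝ} (hc₀ : 0 < c₀ (Real.exp x))
    (hc₁ : 0 < c₁ (Real.exp x)) (θ₀ θ₁ : ℝ) :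
    Real.exp (logWeight θ₀ c₀ x - logWeight θ₁ c₁ x) =
      Real.exp x ^ (θ₁ - θ₀) * (c₀ (Real.exp x) / c₁ (Real.exp x)) := by
  have hdiff : logWeight θ₀ c₀ x - logWeight θ₁ c₁ x = x * (θ₁ - θ₀) +
      (Real.log (c₀ (Real.exp x)) - Real.log (c₁ (Real.exp x))) := by
    unfold logWeight
    ring
  rw [hdiff, Real.exp_add, Real.exp_sub, Real.exp_log hc₀, Real.exp_log hc₁, Real.exp_mul]

lemma logWeight_interpolated {a c₀ c₁ ρ : ℝ → ℝ} {θ₀ θ₁ x : ℝ} (ha : ∀ x, 0 < a (Real.exp x))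
    (hc₀ : 0 < c₀ (Real.exp x)) (hc₁ : 0 < c₁ (Real.exp x))
    (hρ : ρ (Real.exp x) = Real.exp (logWeight θ₀ c₀ x - logWeight θ₁ c₁ x)) (θ : ℝ) :
    logWeight ((1 - θ) * θ₀ + θ * θ₁) (fun t => c₀ t ^ (1 - θ) * c₁ t ^ θ * a (ρ t)) x =
      logWeight θ₀ c₀ x + logWeight θ a (logWeight θ₀ c₀ x - logWeight θ₁ c₁ x) := by
  have hlog : Real.log (c₀ (Real.exp x) ^ (1 - θ) * c₁ (Real.exp x) ^ θ * a (ρ (Real.exp x))) =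
      (1 - θ) * Real.log (c₀ (Real.exp x)) + θ * Real.log (c₁ (Real.exp x)) +
        Real.log (a (Real.exp (logWeight θ₀ c₀ x - logWeight θ₁ c₁ x))) := by
    have haρ := ha (logWeight θ₀ c₀ x - logWeight θ₁ c₁ x)
    rw [hρ, Real.log_mul (by positivity) haρ.ne', Real.log_mul (by positivity) (by positivity),
      Real.log_rpow hc₀, Real.log_rpow hc₁]
  rw [logWeight, hlog]
  unfold logWeight
  ring

theorem theorem26_general {V : Type*} [AddCommGroup V] {N₀ N₁ : V → ℝ≥0∞}
    (h₀ : IsQuasiSeminorm N₀) (h₁ : IsQuasiSeminorm N₁)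
    {θ₀ θ₁ θ : ℝ} (hθ₀ : 0 < θ₀) (hθ₀₁ : θ₀ < θ₁) (hθ₁ : θ₁ < 1) (hθ : 0 < θ) (hθ' : θ < 1)
    {r r₀ r₁ q₀ q₁ : ℝ≥0∞} (hr : r ≠ 0) (hr₀ : r₀ ≠ 0) (hr₁ : r₁ ≠ 0) (hq₀ : q₀ ≠ 0)
    (hq₁ : q₁ ≠ 0) {a a₀ a₁ b₀ b₁ : ℝ → ℝ}
    (ha : CoarselySlowlyVarying a) (ha₀ : CoarselySlowlyVarying a₀)
    (ha₁ : CoarselySlowlyVarying a₁) (hb₀ : CoarselySlowlyVarying b₀)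
    (hb₁ : CoarselySlowlyVarying b₁)
    (hfin₀ : LqNorm r₀ (Ioi 1) (svWgt r₀ (fun s => b₀ s / a₀ s)) ≠ ∞)
    (hfin₁ : LqNorm r₁ (Ioo 0 1) (svWgt r₁ (fun s => b₁ s / a₁ s)) ≠ ∞)
    {c₀ c₁ ρ : ℝ → ℝ}
    (hc₀ : ∀ t, c₀ t = a₀ t * (LqNorm r₀ (Ioi t) (svWgt r₀ (fun s => b₀ s / a₀ s))).toReal)
    (hc₁ : ∀ t, c₁ t = a₁ t * (LqNorm r₁ (Ioo 0 t) (svWgt r₁ (fun s => b₁ s / a₁ s))).toReal)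
    (hρ : ∀ t, ρ t = t ^ (θ₁ - θ₀) * (c₀ t / c₁ t)) :
    EquivNorms
      (normK (normL N₀ N₁ θ₀ r₀ q₀ b₀ a₀) (normR N₀ N₁ θ₁ r₁ q₁ b₁ a₁) θ r a)
      (normK N₀ N₁ ((1 - θ) * θ₀ + θ * θ₁) r
        (fun t => c₀ t ^ (1 - θ) * c₁ t ^ θ * a (ρ t))) := by
  have hsv₀ := ha₀.mul_LqNorm_Ioi (hb₀.div ha₀) hr₀ hfin₀ hc₀
  have hsv₁ := ha₁.mul_LqNorm_Ioo (hb₁.div ha₁) hr₁ hfin₁ hc₁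
  have hΦ₀ := ha₀.isOfClass_limNorm_logWeight (hb₀.div ha₀) hr₀ hq₀ hfin₀ hc₀ θ₀
  have hΦ₁ := ha₁.isOfClass_limNorm_logWeight_comp_neg (hb₁.div ha₁) hr₁ hq₁ hfin₁ hc₁ θ₁
  have hρ' (x : ℝ) : ρ (Real.exp x) = Real.exp (logWeight θ₀ c₀ x - logWeight θ₁ c₁ x) := by
    rw [hρ, exp_logWeight_sub (hsv₀.pos x) (hsv₁.pos x)]
  have hsharp (x : ℝ) : 0 < c₀ (Real.exp x) ^ (1 - θ) * c₁ (Real.exp x) ^ θ *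
      a (ρ (Real.exp x)) := by
    have := hsv₀.pos x
    have := hsv₁.pos x
    have := ha.pos (logWeight θ₀ c₀ x - logWeight θ₁ c₁ x)
    rw [hρ']
    positivity
  rw [normK_eq_kMethod _ _ ha.pos hr, normK_eq_kMethod _ _ hsharp hr,
    normL_eq_kMethod _ _ hb₀.pos ha₀.pos hr₀ hq₀, normR_eq_kMethod _ _ hb₁.pos ha₁.pos hr₁ hq₁]
  simp only [fun x => logWeight_interpolated ha.pos (hsv₀.pos x) (hsv₁.pos x) (hρ' x) θ]
  exact hΦ₀.equivNorms_kMethod hΦ₁ (hsv₀.hasCoarseSlope_logWeight θ₀)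
    (hsv₁.hasCoarseSlope_logWeight θ₁) h₀ h₁ hθ₀ hθ₀₁ hθ₁ (ha.hasCoarseSlope_logWeight θ) hθ hθ' r

theorem theorem26
    (A₀ A₁ : QuasiBanach E)
    (hne : ∃ x : E, x ≠ 0 ∧ A₀.N x ≠ ∞ ∧ A₁.N x ≠ ∞)
    (θ₀ θ₁ θ : ℝ) (hθ₀ : 0 < θ₀) (hθ₀₁ : θ₀ < θ₁) (hθ₁ : θ₁ < 1) (hθ : 0 < θ) (hθ' : θ < 1)
    (r r₀ r₁ q₀ q₁ : ℝ≥0∞) (hr : 0 < r) (hr₀ : 0 < r₀) (hr₁ : 0 < r₁) (hq₀ : 0 < q₀) (hq₁ : 0 < q₁)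
    (a a₀ a₁ b₀ b₁ : ℝ → ℝ)
    (h_sv_a : SlowlyVarying a)
    (h_sv_a₀ : SlowlyVarying a₀)
    (h_sv_a₁ : SlowlyVarying a₁)
    (h_sv_b₀ : SlowlyVarying b₀)
    (h_sv_b₁ : SlowlyVarying b₁)
    (hfin₀ : LqNorm r₀ (Ioi 1) (svWgt r₀ (fun s => b₀ s / a₀ s)) ≠ ∞)
    (hfin₁ : LqNorm r₁ (Ioo 0 1) (svWgt r₁ (fun s => b₁ s / a₁ s)) ≠ ∞)
    (c₀ c₁ ρ : ℝ → ℝ)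
    (hc₀ : ∀ t, c₀ t = a₀ t * (LqNorm r₀ (Ioi t) (svWgt r₀ (fun s => b₀ s / a₀ s))).toReal)
    (hc₁ : ∀ t, c₁ t = a₁ t * (LqNorm r₁ (Ioo 0 t) (svWgt r₁ (fun s => b₁ s / a₁ s))).toReal)
    (hρ : ∀ t, ρ t = t ^ (θ₁ - θ₀) * (c₀ t / c₁ t)) :
    EquivNorms
      (normK (normL A₀.N A₁.N θ₀ r₀ q₀ b₀ a₀) (normR A₀.N A₁.N θ₁ r₁ q₁ b₁ a₁) θ r a)
      (normK A₀.N A₁.N ((1 - θ) * θ₀ + θ * θ₁) r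
        (fun t => c₀ t ^ (1 - θ) * c₁ t ^ θ * a (ρ t))) :=
  theorem26_general A₀.isQuasiSeminorm A₁.isQuasiSeminorm hθ₀ hθ₀₁ hθ₁ hθ hθ' hr.ne' hr₀.ne'
    hr₁.ne' hq₀.ne' hq₁.ne' h_sv_a.coarselySlowlyVarying h_sv_a₀.coarselySlowlyVarying
    h_sv_a₁.coarselySlowlyVarying h_sv_b₀.coarselySlowlyVarying h_sv_b₁.coarselySlowlyVarying
    hfin₀ hfin₁ hc₀ hc₁ hρ

end
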